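/- arXiv:1106.2871 — 6 statements merged into one kernel-verified Lean document; each statement's English description precedes it below -/
import Mathlib

section
/- Every equipartition of a finite set into k parts, each part of size at least ℓ (for a positive integer ℓ), admits a refinement into kℓ parts that is again an equipartition. -/
/-!
Each part `A i` is split separately into `ℓ` parts of size `⌊|A i| / ℓ⌋` or `⌈|A i| / ℓ⌉`
(`exists_balanced_split`). A part of size `b` inside `A i` then satisfies
`ℓ * b < |A i| + ℓ` and `|A i| < ℓ * (b + 1)`. If `b`, `b'` are the sizes of parts inside `A i`
and `A i'`, then `|A i| ≤ |A i'| + 1` gives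
`ℓ * b < |A i| + ℓ ≤ |A i'| + 1 + ℓ ≤ ℓ * (b' + 2)`, that is, `b ≤ b' + 1`.
-/

open Finset

/-- The two size bounds say that `|B j|` is the floor or the ceiling of `|s| / ℓ`. -/
lemma exists_balanced_split {V : Type*} [DecidableEq V] (s : Finset V) (ℓ : ℕ)
    (hℓ : 0 < ℓ) (hs : ℓ ≤ #s) :
    ∃ B : Fin ℓ → Finset V, Finset.univ.biUnion B = s ∧
      (∀ j j', j ≠ j' → Disjoint (B j) (B j')) ∧
      ∀ j, ℓ * #(B j) < #s + ℓ ∧ #s < ℓ * (#(B j) + 1) := by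
  obtain ⟨P, hP, hcard⟩ := Finpartition.exists_equipartition_card_eq s hℓ.ne' hs
  let e : P.parts ≃ Fin ℓ := P.parts.equivFinOfCardEq hcard
  refine ⟨fun j => (e.symm j).1, ?_, ?_, ?_⟩
  · ext x
    simp only [mem_biUnion, mem_univ, true_and]
    constructor
    · rintro ⟨j, hj⟩
      exact P.le (e.symm j).2 hj
    · intro hx
      obtain ⟨t, ht, hxt⟩ := P.exists_mem hx
      exact ⟨e ⟨t, ht⟩, by simpa using hxt⟩
  · intro j j' hne
    exact P.disjoint (e.symm j).2 (e.symm j').2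
      fun h => hne (e.symm.injective (Subtype.ext h))
  · intro j
    have hlt : #s < ℓ * (#(e.symm j).1 + 1) := by
      have h := hP.average_le_card_part (e.symm j).2
      rw [hcard] at h
      exact (Nat.lt_mul_div_succ _ hℓ).trans_le (by gcongr)
    refine ⟨?_, hlt⟩
    -- The upper bound is strict: if `ℓ ∣ |s|`, no part has size `|s| / ℓ + 1`.
    by_contra! hge
    have hle := hP.card_part_le_average_add_one (e.symm j).2
    rw [hcard] at hle
    have hdm := Nat.div_add_mod #s ℓ
    have hmul : ℓ * #(e.symm j).1 ≤ ℓ * (#s / ℓ + 1) := by gcongr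
    rw [mul_add, mul_one] at hmul
    have hmod : #s % #P.parts = 0 := by rw [hcard]; omega
    have hbig : #(e.symm j).1 = #s / #P.parts + 1 := by
      rw [hcard]
      refine le_antisymm hle (Nat.le_of_mul_le_mul_left ?_ hℓ)
      rw [mul_add, mul_one]
      omega
    have hempty := hP.card_large_parts_eq_mod
    rw [hmod, card_eq_zero] at hempty
    have hmem : (e.symm j).1 ∈ P.parts.filter fun p => #p = #s / #P.parts + 1 :=
      mem_filter.2 ⟨(e.symm j).2, hbig⟩
    rw [hempty] at hmem
    exact notMem_empty _ hmem

/-- Every equipartition of a finite set into `k` parts, each part of size at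
least `ℓ` (for a positive integer `ℓ`), admits a refinement into `k * ℓ` parts that is
again an equipartition.  The refinement is indexed by `Fin k × Fin ℓ`, each part `A i`
being partitioned into the `ℓ` parts `B i 0, …, B i (ℓ-1)`. -/
theorem equipartition_refinement {V : Type*} [DecidableEq V] (S : Finset V) (k ℓ : ℕ)
    (hℓ : 0 < ℓ) (A : Fin k → Finset V)
    (hdisj : ∀ i j : Fin k, i ≠ j → Disjoint (A i) (A j))
    (hcover : Finset.univ.biUnion A = S)
    (hequi : ∀ i j : Fin k, (A i).card ≤ (A j).card + 1)
    (hsize : ∀ i : Fin k, ℓ ≤ (A i).card) :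
    ∃ B : Fin k → Fin ℓ → Finset V,
      (∀ i : Fin k, Finset.univ.biUnion (B i) = A i) ∧
      (∀ (i : Fin k) (j : Fin ℓ) (i' : Fin k) (j' : Fin ℓ),
        (i, j) ≠ (i', j') → Disjoint (B i j) (B i' j')) ∧
      (∀ (i : Fin k) (j : Fin ℓ) (i' : Fin k) (j' : Fin ℓ),
        (B i j).card ≤ (B i' j').card + 1) := by
  choose B hB hBd hBc using fun i => exists_balanced_split (A i) ℓ hℓ (hsize i)
  refine ⟨B, hB, ?_, ?_⟩
  · intro i j i' j' hne
    by_cases hi : i = i'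
    · subst hi
      exact hBd i j j' fun h => hne (by rw [h])
    · refine (hdisj i i' hi).mono ?_ ?_
      · rw [← hB i]; exact subset_biUnion_of_mem (B i) (mem_univ j)
      · rw [← hB i']; exact subset_biUnion_of_mem (B i') (mem_univ j')
  · intro i j i' j'
    have h1 := (hBc i j).1
    have h2 := (hBc i' j').2
    have h3 := hequi i i'
    have h4 : ℓ * #(B i j) < ℓ * (#(B i' j') + 2) := by
      rw [mul_add] at h2 ⊢
      omega
    exact Nat.lt_succ_iff.1 (Nat.lt_of_mul_lt_mul_left h4)
end

section
/- For every positive integer m and every ε > 0, there exists an integer M = M(m, ε) with the following property: if G is a (simple, undirected) graph with n ≥ M vertices, and A is an equipartition of the vertex set of G of order at most m, then there exists a refinement B of A of order k, where m ≤ k ≤ M, which is an ε-regular partition. -/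
/-!
The proof rests on the fact that the energy-increment step of Mathlib's proof of Szemerédi's
regularity lemma (`SzemerediRegularity.increment`) subdivides each part of the current
equipartition, so it produces a genuine refinement. Hence it suffices to start the iteration at
an equipartition that refines `A`.

Such a starting point is obtained by cutting every part of `A` into the same number `t` of pieces.
The parts of `A` have sizes `q` or `q + 1`, so all the pieces can be given sizes `⌊q / t⌋` or
`⌊q / t⌋ + 1` (`exists_equipartition_refining`). Each increment of a non-uniform partition raises
the energy by `ε ^ 5 / 4`, and the energy is at most `1`, so the iteration reaches a uniform
partition after at most `⌊4 / ε ^ 5⌋ + 1` steps (`exists_uniform_refinement`). Uniformity of a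
`Finpartition` implies regularity of the enumerated family of its parts, since the ordered
pairs counted on one side include the pairs `i < j` counted on the other.
-/

open Finset
open scoped Classical

/-- The density `d(A,B) = e(A,B)/(|A||B|)` of a pair of (disjoint) vertex sets. -/
noncomputable def gdensity {V : Type*} [DecidableEq V] (G : SimpleGraph V)
    (A B : Finset V) : ℝ :=
  (((A ×ˢ B).filter fun p => G.Adj p.1 p.2).card : ℝ) / ((A.card : ℝ) * (B.card : ℝ))

/-- A pair `(A,B)` is `γ`-regular: all sufficiently large subpairs have density within `γ`
of `d(A,B)`. -/
def GRegular {V : Type*} [DecidableEq V] (G : SimpleGraph V) (γ : ℝ) (A B : Finset V) :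
    Prop :=
  ∀ A' ⊆ A, ∀ B' ⊆ B, γ * A.card ≤ A'.card → γ * B.card ≤ B'.card →
    |gdensity G A' B' - gdensity G A B| ≤ γ

/-- `P` is an equipartition of `S`: pairwise disjoint parts covering `S`, with any two
part sizes differing by at most 1. -/
def IsEquipartition {V : Type*} [DecidableEq V] {ι : Type*} [Fintype ι]
    (S : Finset V) (P : ι → Finset V) : Prop :=
  (∀ i j : ι, i ≠ j → Disjoint (P i) (P j)) ∧
  Finset.univ.biUnion P = S ∧
  ∀ i j : ι, (P i).card ≤ (P j).card + 1

/-- A `γ`-regular partition: an equipartition of the vertex set in which all but at most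
`γ k²` of the pairs `i < j` are `γ`-regular. -/
def GRegularPartition {V : Type*} [Fintype V] [DecidableEq V] (G : SimpleGraph V)
    (γ : ℝ) {k : ℕ} (P : Fin k → Finset V) : Prop :=
  IsEquipartition (univ : Finset V) P ∧
  (((univ : Finset (Fin k × Fin k)).filter fun p =>
      p.1 < p.2 ∧ ¬ GRegular G γ (P p.1) (P p.2)).card : ℝ) ≤ γ * (k : ℝ) ^ 2

open SzemerediRegularity in
/-- An increment step refines the partition it starts from. -/
lemma increment_le {V : Type*} [Fintype V] [DecidableEq V] (G : SimpleGraph V)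
    [DecidableRel G.Adj] {P : Finpartition (univ : Finset V)} (hP : P.IsEquipartition) (ε : ℝ) :
    increment hP G ε ≤ P := by
  intro b hb
  rw [increment, Finpartition.mem_bind] at hb
  obtain ⟨U, hU, hb⟩ := hb
  exact ⟨U, hU, Finpartition.le _ hb⟩

/-- A set of size between `t * c` and `t * (c + 1)` can be cut into `t` pieces of sizes `c` and
`c + 1`. -/
lemma exists_finpartition_card {V : Type*} [DecidableEq V] (s : Finset V) {t c : ℕ} (hc : c ≠ 0)
    (h₁ : t * c ≤ #s) (h₂ : #s ≤ t * (c + 1)) :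
    ∃ Q : Finpartition s, #Q.parts = t ∧ ∀ u ∈ Q.parts, #u = c ∨ #u = c + 1 := by
  obtain ⟨b, hb⟩ := Nat.exists_eq_add_of_le h₁
  have hbt : b ≤ t := by rw [mul_add] at h₂; omega
  obtain ⟨d, rfl⟩ := Nat.exists_eq_add_of_le' hbt
  have h : d * c + b * (c + 1) = #s := by rw [hb]; ring
  exact ⟨(⊥ : Finpartition s).equitabilise h, Finpartition.card_parts_equitabilise _ h hc,
    fun u hu => Finpartition.card_eq_of_mem_parts_equitabilise hu⟩

/-- Any equipartition has an equipartition refining it in which each part is cut into exactly `t`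
pieces, provided that the ground set is large enough. -/
lemma exists_equipartition_refining {V : Type*} [Fintype V] [DecidableEq V]
    {P : Finpartition (univ : Finset V)} (hP : P.IsEquipartition) {t : ℕ} (ht : 0 < t)
    (hV : t * #P.parts ≤ Fintype.card V) (hpos : 0 < #P.parts) :
    ∃ Q : Finpartition (univ : Finset V), Q.IsEquipartition ∧ Q ≤ P ∧
      #Q.parts = #P.parts * t := by
  set q := Fintype.card V / #P.parts with hq
  set c := q / t with hc
  have hc0 : c ≠ 0 := by
    have : t ≤ q := (Nat.le_div_iff_mul_le hpos).2 hV
    exact (Nat.div_pos this ht).ne'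
  have hcut : ∀ U ∈ P.parts, ∃ Q : Finpartition U, #Q.parts = t ∧
      ∀ u ∈ Q.parts, #u = c ∨ #u = c + 1 := by
    intro U hU
    have h := hP.card_parts_eq_average hU
    rw [card_univ, ← hq] at h
    have h₁ : t * c ≤ q := Nat.mul_div_le q t
    have h₂ : q < t * (c + 1) := Nat.lt_mul_div_succ q ht
    exact exists_finpartition_card U hc0 (by omega) (by omega)
  choose Q hQ₁ hQ₂ using hcut
  refine ⟨P.bind Q, ?_, ?_, ?_⟩
  · refine Set.equitableOn_iff_exists_eq_eq_add_one.2 ⟨c, fun u hu => ?_⟩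
    rw [mem_coe, Finpartition.mem_bind] at hu
    obtain ⟨U, hU, hu⟩ := hu
    exact hQ₂ U hU u hu
  · intro u hu
    obtain ⟨U, hU, hu⟩ := Finpartition.mem_bind.1 hu
    exact ⟨U, hU, Finpartition.le _ hu⟩
  · rw [Finpartition.card_bind, sum_congr rfl fun A _ => hQ₁ A.1 A.2]
    simp

open SzemerediRegularity in
/-- Energy-increment iteration: an equipartition `D` with sufficiently many parts has a uniform
equipartition refining it, with a number of parts bounded in terms of any bound `T` on `#D.parts`.
-/
lemma exists_uniform_refinement {V : Type*} [Fintype V] [DecidableEq V] (G : SimpleGraph V)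
    [DecidableRel G.Adj] {ε : ℝ} (hε : 0 < ε) (hε₁ : ε ≤ 1) (l T : ℕ)
    (hV : stepBound^[⌊4 / ε ^ 5⌋₊ + 1] T * 16 ^ stepBound^[⌊4 / ε ^ 5⌋₊ + 1] T ≤ Fintype.card V)
    {D : Finpartition (univ : Finset V)} (hD : D.IsEquipartition)
    (hDl : initialBound ε l ≤ #D.parts) (hDT : #D.parts ≤ T) :
    ∃ P : Finpartition (univ : Finset V), P.IsEquipartition ∧ P ≤ D ∧ #D.parts ≤ #P.parts ∧
      #P.parts ≤ stepBound^[⌊4 / ε ^ 5⌋₊ + 1] T ∧ P.IsUniform G ε := by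
  suffices h : ∀ i ≤ ⌊4 / ε ^ 5⌋₊ + 1, ∃ P : Finpartition (univ : Finset V),
      P.IsEquipartition ∧ P ≤ D ∧ #D.parts ≤ #P.parts ∧ #P.parts ≤ stepBound^[i] T ∧
      (P.IsUniform G ε ∨ ε ^ 5 / 4 * i ≤ P.energy G) by
    obtain ⟨P, hP₁, hP₂, hP₃, hP₄, hP₅⟩ := h _ le_rfl
    refine ⟨P, hP₁, hP₂, hP₃, hP₄, hP₅.resolve_right fun hE => lt_irrefl (1 : ℝ) ?_⟩
    calc
      (1 : ℝ) = ε ^ 5 / 4 * (4 / ε ^ 5) := by field_simp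
      _ < ε ^ 5 / 4 * (⌊4 / ε ^ 5⌋₊ + 1) := by gcongr; exact Nat.lt_floor_add_one _
      _ ≤ (P.energy G : ℝ) := by rwa [← Nat.cast_add_one]
      _ ≤ 1 := mod_cast P.energy_le_one G
  intro i
  induction i with
  | zero =>
    intro _
    refine ⟨D, hD, le_rfl, le_rfl, hDT, Or.inr ?_⟩
    rw [Nat.cast_zero, mul_zero]
    exact mod_cast D.energy_nonneg G
  | succ i ih =>
    intro hi
    obtain ⟨P, hP₁, hP₂, hP₃, hP₄, hP₅⟩ := ih (by omega)
    by_cases hu : P.IsUniform G ε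
    · refine ⟨P, hP₁, hP₂, hP₃, ?_, Or.inl hu⟩
      rw [Function.iterate_succ_apply']
      exact hP₄.trans (le_stepBound _)
    replace hP₅ := hP₅.resolve_left hu
    have hl : initialBound ε l ≤ #P.parts := hDl.trans hP₃
    have hε100 : 100 ≤ 4 ^ #P.parts * ε ^ 5 :=
      (hundred_lt_pow_initialBound_mul hε l).le.trans
        (mul_le_mul_of_nonneg_right (pow_right_mono₀ (by simp) hl) <| by positivity)
    have hsize : #P.parts ≤ stepBound^[⌊4 / ε ^ 5⌋₊ + 1] T :=
      hP₄.trans (Function.monotone_iterate_of_id_le le_stepBound (by omega) _)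
    have hPV : #P.parts * 16 ^ #P.parts ≤ Fintype.card V :=
      (Nat.mul_le_mul hsize (Nat.pow_le_pow_right (by simp) hsize)).trans hV
    have : Nonempty V := by
      have h7 := (seven_le_initialBound ε l).trans hl
      rw [← Fintype.card_pos_iff]
      exact lt_of_lt_of_le (Nat.mul_pos (by omega) (Nat.pow_pos (by norm_num))) hPV
    refine ⟨increment hP₁ G ε, increment_isEquipartition hP₁ G ε,
      (increment_le G hP₁ ε).trans hP₂, ?_, ?_, Or.inr <| le_trans ?_ <|
      energy_increment hP₁ ((seven_le_initialBound ε l).trans hl) hε100 hPV hu hε.le hε₁⟩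
    · rw [card_increment hPV hu]
      exact hP₃.trans (le_stepBound _)
    · rw [card_increment hPV hu, Function.iterate_succ_apply']
      exact stepBound_mono hP₄
    · rw [Nat.cast_succ, mul_add, mul_one]
      gcongr

lemma gdensity_eq_edgeDensity {V : Type*} [DecidableEq V] (G : SimpleGraph V) (A B : Finset V) :
    gdensity G A B = (G.edgeDensity A B : ℝ) := by
  rw [gdensity, SimpleGraph.edgeDensity_def, SimpleGraph.interedges_def]
  push_cast
  rfl

lemma gregular_of_isUniform {V : Type*} [DecidableEq V] {G : SimpleGraph V} {ε : ℝ}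
    {A B : Finset V} (h : G.IsUniform ε A B) : GRegular G ε A B := by
  intro A' hA' B' hB' hA hB
  rw [gdensity_eq_edgeDensity, gdensity_eq_edgeDensity]
  exact (h hA' hB' (by rwa [mul_comm]) (by rwa [mul_comm])).le

/-- The parts of a uniform equipartition, enumerated in any way, form a regular partition. -/
lemma gregularPartition_of_isUniform {V : Type*} [Fintype V] [DecidableEq V] {G : SimpleGraph V}
    {ε : ℝ} (hε : 0 < ε) {P : Finpartition (univ : Finset V)} (hP : P.IsEquipartition)
    (hu : P.IsUniform G ε) :
    GRegularPartition G ε fun i => (P.parts.equivFin.symm i : Finset V) := by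
  have hinj : Function.Injective fun i => (P.parts.equivFin.symm i : Finset V) :=
    Subtype.val_injective.comp P.parts.equivFin.symm.injective
  have hmem : ∀ i, (P.parts.equivFin.symm i : Finset V) ∈ P.parts := fun i => Subtype.prop _
  refine ⟨⟨fun i j hij => P.disjoint (hmem i) (hmem j) (hinj.ne hij), ?_,
    fun i j => hP (hmem i) (hmem j)⟩, ?_⟩
  · ext v
    simp only [mem_biUnion, mem_univ, true_and, iff_true]
    obtain ⟨U, hU, hv⟩ := P.exists_mem (mem_univ v)
    exact ⟨P.parts.equivFin ⟨U, hU⟩, by simpa using hv⟩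
  · refine le_trans (b := (#(P.nonUniforms G ε) : ℝ)) ?_ (hu.trans ?_)
    · refine Nat.cast_le.2 (card_le_card_of_injOn
        (fun p => ((P.parts.equivFin.symm p.1 : Finset V),
          (P.parts.equivFin.symm p.2 : Finset V))) ?_ ?_)
      · intro p hp
        simp only [mem_coe, mem_filter, mem_univ, true_and] at hp
        rw [mem_coe, Finpartition.mk_mem_nonUniforms]
        exact ⟨hmem _, hmem _, hinj.ne hp.1.ne, fun h => hp.2 (gregular_of_isUniform h)⟩
      · intro p _ p' _ h
        simp only [Prod.mk.injEq] at h
        exact Prod.ext (hinj h.1) (hinj h.2)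
    · rw [mul_comm, sq]
      gcongr
      exact_mod_cast Nat.mul_le_mul_left _ (Nat.sub_le _ _)

/-- An indexed equipartition with fewer indices than vertices has no empty part, hence is a
`Finpartition`. -/
lemma exists_finpartition_of_isEquipartition {V : Type*} [Fintype V] [DecidableEq V] {a : ℕ}
    {A : Fin a → Finset V} (hA : IsEquipartition (univ : Finset V) A)
    (ha : a < Fintype.card V) :
    ∃ P : Finpartition (univ : Finset V), P.IsEquipartition ∧ P.parts = univ.image A := by
  obtain ⟨hdisj, hcov, hcard⟩ := hA
  have hne : ∀ i, A i ≠ ∅ := by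
    intro i hi
    -- an empty part forces every part to have at most one vertex, so `card V ≤ a`
    have h : Fintype.card V ≤ a := by
      rw [← card_univ, ← hcov]
      refine card_biUnion_le.trans ?_
      refine (sum_le_card_nsmul _ _ 1 fun j _ => ?_).trans (by simp)
      simpa [hi] using hcard j i
    omega
  refine ⟨⟨univ.image A, ?_, ?_, ?_⟩, ?_, rfl⟩
  · rw [supIndep_iff_pairwiseDisjoint]
    intro x hx y hy hxy
    simp only [coe_image, coe_univ, Set.image_univ, Set.mem_range] at hx hy
    obtain ⟨i, rfl⟩ := hx
    obtain ⟨j, rfl⟩ := hy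
    exact hdisj i j fun h => hxy (h ▸ rfl)
  · rw [sup_image, ← hcov, ← sup_eq_biUnion]
    rfl
  · simpa using hne
  · intro x y hx hy
    simp only [coe_image, coe_univ, Set.image_univ, Set.mem_range] at hx hy
    obtain ⟨i, rfl⟩ := hx
    obtain ⟨j, rfl⟩ := hy
    exact hcard i j

/-- Szemerédi's regularity lemma, refinement version, for graphs. -/
theorem szemeredi_regularity_refinement (m : ℕ) (hm : 0 < m) (ε : ℝ) (hε : 0 < ε) :
    ∃ M : ℕ, ∀ (V : Type) [Fintype V] [DecidableEq V] (G : SimpleGraph V),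
      M ≤ Fintype.card V →
      ∀ (a : ℕ) (A : Fin a → Finset V), a ≤ m →
        IsEquipartition (univ : Finset V) A →
        ∃ (k : ℕ) (B : Fin k → Finset V),
          m ≤ k ∧ k ≤ M ∧
          (∀ j : Fin k, ∃ i : Fin a, B j ⊆ A i) ∧
          GRegularPartition G ε B := by
  -- The increment step requires `ε ≤ 1`; regularity is monotone in `ε`.
  set δ : ℝ := min ε 1
  have hδ : 0 < δ := lt_min hε one_pos
  set t := SzemerediRegularity.initialBound δ m
  have ht7 : 7 ≤ t := SzemerediRegularity.seven_le_initialBound δ m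
  have htm : m ≤ t := SzemerediRegularity.le_initialBound δ m
  set T := m * t
  set K := SzemerediRegularity.stepBound^[⌊4 / δ ^ 5⌋₊ + 1] T
  have hTK : T ≤ K := Function.id_le_iterate_of_id_le SzemerediRegularity.le_stepBound _ _
  have hKM : K ≤ K * 16 ^ K := Nat.le_mul_of_pos_right _ (by positivity)
  refine ⟨K * 16 ^ K, fun V _ _ G hV a A ham hA => ?_⟩
  have hmT : m * 7 ≤ T := Nat.mul_le_mul_left m ht7
  obtain ⟨P₀, hP₀, hparts⟩ := exists_finpartition_of_isEquipartition hA (by omega)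
  have hP₀m : #P₀.parts ≤ m := by
    rw [hparts]
    exact card_image_le.trans (by simpa using ham)
  have hP₀pos : 0 < #P₀.parts := by
    have : Nonempty V := Fintype.card_pos_iff.1 (by omega)
    exact (P₀.parts_nonempty univ_nonempty.ne_empty).card_pos
  obtain ⟨D, hD, hDP, hDcard⟩ := exists_equipartition_refining hP₀ (t := t) (by omega)
    ((Nat.mul_le_mul_left t hP₀m).trans (by rw [mul_comm]; omega)) hP₀pos
  obtain ⟨P, hP, hPD, hDle, hPK, hu⟩ := exists_uniform_refinement G hδ (min_le_right _ _) m T hV hD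
    (by rw [hDcard]; exact Nat.le_mul_of_pos_left _ hP₀pos)
    (by rw [hDcard]; exact Nat.mul_le_mul_right _ hP₀m)
  refine ⟨#P.parts, fun i => (P.parts.equivFin.symm i : Finset V), ?_, hPK.trans hKM, ?_,
    gregularPartition_of_isUniform hε hP (hu.mono (min_le_left _ _))⟩
  · refine htm.trans (le_trans ?_ hDle)
    rw [hDcard]
    exact Nat.le_mul_of_pos_left _ hP₀pos
  · intro j
    obtain ⟨U, hU, hjU⟩ := (hPD.trans hDP) (P.parts.equivFin.symm j).2
    rw [hparts, mem_image] at hU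
    obtain ⟨i, -, rfl⟩ := hU
    exact ⟨i, hjU⟩
end

section
/- For every 0 < η < 1 and positive integer k there exist γ > 0 and δ > 0 with the following property: if H is a graph with vertices v_1, …, v_k, and V_1, …, V_k are disjoint vertex sets in a graph G such that for every 1 ≤ i < i' ≤ k the pair (V_i, V_{i'}) is γ-regular, with density at least η if v_i v_{i'} is an edge of H and density at most 1 − η if v_i v_{i'} is not an edge of H, then at least δ·∏_{i=1}^k |V_i| of the k-tuples (w_1, …, w_k) with w_i ∈ V_i span induced copies of H, i.e., for all i < i', w_i w_{i'} is an edge of G if and only if v_i v_{i'} is an edge of H. -/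
/-!
The proof is the usual greedy embedding. Only a one-sided consequence of regularity is used
(`LowerRegular`): between large subsets the pairs of the prescribed kind (edges or non-edges,
according to `H`) have density at least `β = η / 2`. Passing to subsets that are a `β`-fraction of
the original sets keeps this property with the same `β` and with `γ` replaced by `γ / β`.

By induction on the number of parts (`exists_count_lower_bound`), all but at most half of the
vertices `v` of the first part have the right adjacency to at least a `β`-fraction of every other
part (`card_bad_lt` bounds the exceptions for one part). For each such `v` the induction
hypothesis, applied to these `R`-neighbourhoods of `v`, produces many copies of the remaining
vertices.
-/

open Finset
open scoped Classical

/-- One-sided regularity of a pair `(A, B)` for a relation `R`: any two subsets containing at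
least a `γ`-fraction of `A` and `B` span `R`-pairs of density at least `β`. -/
def LowerRegular {V : Type*} (R : V → V → Prop) (β γ : ℝ) (A B : Finset V) : Prop :=
  ∀ A' ⊆ A, ∀ B' ⊆ B, γ * A.card ≤ A'.card → γ * B.card ≤ B'.card →
    β * (A'.card * B'.card) ≤ ∑ a ∈ A', ((B'.filter fun b => R a b).card : ℝ)

theorem LowerRegular.mono {V : Type*} {R : V → V → Prop} {β γ γ' c : ℝ} {A B A₁ B₁ : Finset V}
    (h : LowerRegular R β γ A B) (hγ' : 0 ≤ γ') (hγ : γ ≤ c * γ') (hA : A₁ ⊆ A) (hB : B₁ ⊆ B)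
    (hcA : c * A.card ≤ A₁.card) (hcB : c * B.card ≤ B₁.card) : LowerRegular R β γ' A₁ B₁ := by
  have key : ∀ x y z : ℕ, c * x ≤ (y : ℝ) → γ' * y ≤ z → γ * x ≤ z := by
    intro x y z hxy hyz
    calc γ * x ≤ c * γ' * x := by gcongr
      _ = γ' * (c * x) := by ring
      _ ≤ γ' * y := by gcongr
      _ ≤ z := hyz
  intro A' hA' B' hB' h1 h2
  exact h A' (hA'.trans hA) B' (hB'.trans hB) (key _ _ _ hcA h1) (key _ _ _ hcB h2)

/-- Few vertices of `A` have fewer than `β |B|` `R`-neighbours in `B`: otherwise the set of all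
such vertices, together with `B`, would contradict one-sided regularity. -/
theorem card_bad_lt {V : Type*} {R : V → V → Prop} {β γ : ℝ} {A B : Finset V}
    (h : LowerRegular R β γ A B) (hγ0 : 0 < γ) (hγ1 : γ ≤ 1) (hA : 0 < A.card) :
    ((A.filter fun a => ((B.filter fun b => R a b).card : ℝ) < β * B.card).card : ℝ)
      < γ * A.card := by
  by_contra! hcon
  have hA' : (0 : ℝ) < A.card := by exact_mod_cast hA
  have h1 := h _ (filter_subset _ _) B (Subset.refl _) hcon
    (by nlinarith [(Nat.cast_nonneg B.card : (0 : ℝ) ≤ B.card)])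
  have hne : (A.filter fun a => ((B.filter fun b => R a b).card : ℝ) < β * B.card).Nonempty := by
    rw [← Finset.card_pos]
    have : (0 : ℝ) < γ * A.card := by positivity
    exact_mod_cast this.trans_le hcon
  have h2 := Finset.sum_lt_sum_of_nonempty hne
    (f := fun a => ((B.filter fun b => R a b).card : ℝ)) (g := fun _ => β * B.card)
    (fun a ha => (mem_filter.1 ha).2)
  rw [Finset.sum_const, nsmul_eq_mul] at h2
  linarith

/-- The tuples `w` with `w i ∈ W i` for all `i` and `R i j (w i) (w j)` for all `i < j`. -/
noncomputable def copies {V : Type*} [Fintype V] {k : ℕ} (R : Fin k → Fin k → V → V → Prop)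
    (W : Fin k → Finset V) : Finset (Fin k → V) :=
  univ.filter fun w => (∀ i, w i ∈ W i) ∧ ∀ i j, i < j → R i j (w i) (w j)

/-- Copies extending a fixed first vertex `v` correspond to copies in the `R`-neighbourhoods
of `v`. -/
theorem sum_card_copies_le {V : Type*} [Fintype V] {k : ℕ}
    (R : Fin (k + 1) → Fin (k + 1) → V → V → Prop) (W : Fin (k + 1) → Finset V)
    (S : Finset V) (hS : S ⊆ W 0) :
    ∑ v ∈ S, (copies (fun i j => R i.succ j.succ)
      (fun j => (W j.succ).filter fun b => R 0 j.succ v b)).card ≤ (copies R W).card := by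
  rw [← Finset.card_sigma]
  refine Finset.card_le_card_of_injOn (fun p => (Fin.cons p.1 p.2 : Fin (k + 1) → V)) ?_ ?_
  · rintro ⟨v, w⟩ hp
    simp only [copies, coe_sigma, Set.mem_sigma_iff, mem_coe, mem_filter, mem_univ,
      true_and] at hp ⊢
    obtain ⟨hv, hw, hR⟩ := hp
    refine ⟨fun i => ?_, fun i j hij => ?_⟩
    · induction i using Fin.cases with
      | zero => exact hS hv
      | succ i => exact (hw i).1
    · induction j using Fin.cases with
      | zero => exact absurd hij (Fin.not_lt_zero i)
      | succ j =>
        induction i using Fin.cases with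
        | zero => exact (hw j).2
        | succ i => exact hR i j (Fin.succ_lt_succ_iff.1 hij)
  · rintro ⟨v, w⟩ _ ⟨v', w'⟩ _ h
    obtain ⟨rfl, rfl⟩ := Fin.cons_inj.1 h
    rfl

/-- Counting lemma for one-sidedly regular tuples of vertex sets. -/
theorem exists_count_lower_bound (β : ℝ) (hβ : 0 < β) (k : ℕ) :
    ∃ γ δ : ℝ, 0 < γ ∧ 0 < δ ∧
      ∀ (V : Type) [Fintype V] (R : Fin k → Fin k → V → V → Prop) (W : Fin k → Finset V),
        (∀ i j, i < j → LowerRegular (R i j) β γ (W i) (W j)) →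
        δ * ∏ i, ((W i).card : ℝ) ≤ (copies R W).card := by
  induction k with
  | zero =>
    refine ⟨1, 1, one_pos, one_pos, ?_⟩
    intro V _ R W _
    simp [copies]
  | succ k ih =>
    obtain ⟨γ', δ', hγ', hδ', ih⟩ := ih
    -- `γ ≤ β γ'` makes the induction hypothesis applicable inside neighbourhoods;
    -- `k γ ≤ 1/2` leaves half of the first part as candidates for the first vertex.
    refine ⟨min (β * γ') (1 / (2 * (k + 1))), δ' * β ^ k / 2, by positivity, by positivity, ?_⟩
    intro V _ R W hreg
    set γ : ℝ := min (β * γ') (1 / (2 * (k + 1))) with hγdef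
    have hγ0 : 0 < γ := by positivity
    have hγk : γ * (2 * (k + 1)) ≤ 1 := by
      rw [← le_div_iff₀ (by positivity)]
      exact min_le_right _ _
    have hk0 : (0 : ℝ) ≤ k := Nat.cast_nonneg k
    have hγ1 : γ ≤ 1 := by nlinarith
    rcases Nat.eq_zero_or_pos (W 0).card with h0 | h0
    · rw [Fin.prod_univ_succ, h0]
      simp
    have hM : 0 ≤ δ' * (β ^ k * ∏ j : Fin k, ((W j.succ).card : ℝ)) :=
      mul_nonneg hδ'.le (mul_nonneg (pow_nonneg hβ.le k)
        (Finset.prod_nonneg fun j _ => Nat.cast_nonneg _))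
    set N : V → Fin k → Finset V := fun v j => (W j.succ).filter fun b => R 0 j.succ v b with hN
    set bad : Fin k → Finset V := fun j =>
      (W 0).filter fun a => ((N a j).card : ℝ) < β * (W j.succ).card with hbad
    have hbadcard : ∀ j, ((bad j).card : ℝ) ≤ γ * (W 0).card := fun j =>
      (card_bad_lt (hreg 0 j.succ (Fin.succ_pos j)) hγ0 hγ1 h0).le
    set S : Finset V := W 0 \ univ.biUnion bad with hS
    have hScard : ((W 0).card : ℝ) / 2 ≤ S.card := by
      have h1 : ((univ.biUnion bad).card : ℝ) ≤ k * (γ * (W 0).card) := by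
        calc ((univ.biUnion bad).card : ℝ) ≤ ∑ j, ((bad j).card : ℝ) := by
              exact_mod_cast Finset.card_biUnion_le
          _ ≤ ∑ _j : Fin k, γ * (W 0).card := Finset.sum_le_sum fun j _ => hbadcard j
          _ = k * (γ * (W 0).card) := by simp
      have h2 : ((W 0).card : ℝ) ≤ S.card + (univ.biUnion bad).card := by
        have := Finset.card_le_card_sdiff_add_card (s := W 0) (t := univ.biUnion bad)
        exact_mod_cast this
      have h3 : (k : ℝ) * γ ≤ 1 / 2 := by nlinarith
      have h4 : (k : ℝ) * γ * (W 0).card ≤ 1 / 2 * (W 0).card := by gcongr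
      linarith
    have hgood : ∀ v ∈ S, ∀ j, β * (W j.succ).card ≤ ((N v j).card : ℝ) := by
      intro v hv j
      by_contra! hcon
      obtain ⟨hv0, hv1⟩ := mem_sdiff.1 hv
      exact hv1 (mem_biUnion.2 ⟨j, mem_univ _, mem_filter.2 ⟨hv0, hcon⟩⟩)
    have hcount : ∀ v ∈ S, δ' * (β ^ k * ∏ j : Fin k, ((W j.succ).card : ℝ)) ≤
        ((copies (fun i j => R i.succ j.succ) (N v)).card : ℝ) := by
      intro v hv
      refine le_trans ?_ (ih V (fun i j => R i.succ j.succ) (N v) fun i j hij =>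
        (hreg i.succ j.succ (Fin.succ_lt_succ_iff.2 hij)).mono hγ'.le (min_le_left _ _)
          (filter_subset _ _) (filter_subset _ _) (hgood v hv i) (hgood v hv j))
      gcongr
      calc β ^ k * ∏ j : Fin k, ((W j.succ).card : ℝ)
          = ∏ j : Fin k, β * ((W j.succ).card : ℝ) := by
            rw [Finset.prod_mul_distrib, Finset.prod_const, Finset.card_univ, Fintype.card_fin]
        _ ≤ ∏ j, ((N v j).card : ℝ) :=
          Finset.prod_le_prod (fun j _ => by positivity) fun j _ => hgood v hv j
    calc δ' * β ^ k / 2 * ∏ i, ((W i).card : ℝ)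
        = (W 0).card / 2 * (δ' * (β ^ k * ∏ j : Fin k, ((W j.succ).card : ℝ))) := by
          rw [Fin.prod_univ_succ]; ring
      _ ≤ S.card * (δ' * (β ^ k * ∏ j : Fin k, ((W j.succ).card : ℝ))) :=
          mul_le_mul_of_nonneg_right hScard hM
      _ = ∑ _v ∈ S, δ' * (β ^ k * ∏ j : Fin k, ((W j.succ).card : ℝ)) := by
          rw [Finset.sum_const, nsmul_eq_mul]
      _ ≤ ∑ v ∈ S, ((copies (fun i j => R i.succ j.succ) (N v)).card : ℝ) :=
          Finset.sum_le_sum hcount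
      _ ≤ (copies R W).card := by
          exact_mod_cast sum_card_copies_le R W S sdiff_subset

/-- Also valid when `A` or `B` is empty, where `gdensity` takes the value `0`. -/
theorem gdensity_mul {V : Type*} [DecidableEq V] (G : SimpleGraph V) (A B : Finset V) :
    gdensity G A B * (A.card * B.card) = ∑ a ∈ A, ((B.filter fun b => G.Adj a b).card : ℝ) := by
  have h : ((A ×ˢ B).filter fun p => G.Adj p.1 p.2).card =
      ∑ a ∈ A, (B.filter fun b => G.Adj a b).card := by
    simp only [Finset.card_filter, Finset.sum_product]
  have h' : ∑ a ∈ A, ((B.filter fun b => G.Adj a b).card : ℝ) =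
      (((A ×ˢ B).filter fun p => G.Adj p.1 p.2).card : ℝ) := by
    rw [h]; push_cast; rfl
  rw [h', gdensity]
  rcases Finset.eq_empty_or_nonempty A with rfl | hA
  · simp
  rcases Finset.eq_empty_or_nonempty B with rfl | hB
  · simp
  have := hA.card_pos
  have := hB.card_pos
  field_simp

/-- Regularity of the pair, with the density bound belonging to `P` (whether the pair should be
an edge), gives one-sided regularity for the relation of being adjacent if and only if `P`. -/
theorem GRegular.lowerRegular {V : Type*} [DecidableEq V] {G : SimpleGraph V} {η γ γ₀ : ℝ}
    {A B : Finset V} (h : GRegular G γ A B) (hγ : γ ≤ η / 2) (hγ₀ : γ ≤ γ₀) (P : Prop)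
    (h1 : P → η ≤ gdensity G A B) (h2 : ¬ P → gdensity G A B ≤ 1 - η) :
    LowerRegular (fun a b => G.Adj a b ↔ P) (η / 2) γ₀ A B := by
  intro A' hA' B' hB' hcA hcB
  have hd := abs_le.1 (h A' hA' B' hB' (le_trans (by gcongr) hcA) (le_trans (by gcongr) hcB))
  have hmul := gdensity_mul G A' B'
  have hnn : (0 : ℝ) ≤ (A'.card : ℝ) * B'.card := by positivity
  by_cases hP : P
  · simp only [hP, iff_true]
    rw [← hmul]
    have := h1 hP
    exact mul_le_mul_of_nonneg_right (by linarith) hnn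
  · simp only [hP, iff_false]
    have hsum : ∑ a ∈ A', ((B'.filter fun b => G.Adj a b).card : ℝ) +
        ∑ a ∈ A', ((B'.filter fun b => ¬ G.Adj a b).card : ℝ) = A'.card * B'.card := by
      rw [← Finset.sum_add_distrib, ← nsmul_eq_mul, ← Finset.sum_const]
      refine Finset.sum_congr rfl fun a _ => ?_
      exact_mod_cast Finset.card_filter_add_card_filter_not (s := B') (fun b => G.Adj a b)
    have hd2 : gdensity G A' B' ≤ 1 - η / 2 := by linarith [h2 hP]
    have := mul_le_mul_of_nonneg_right hd2 hnn
    linarith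

/-- the Embedding lemma for (induced copies of) graphs. -/
theorem embedding_lemma_graph (η : ℝ) (hη0 : 0 < η) (hη1 : η < 1) (k : ℕ) (hk : 0 < k) :
    ∃ γ δ : ℝ, 0 < γ ∧ 0 < δ ∧
      ∀ (V : Type) [Fintype V] [DecidableEq V] (G : SimpleGraph V)
        (H : SimpleGraph (Fin k)) (W : Fin k → Finset V),
        (∀ i j : Fin k, i ≠ j → Disjoint (W i) (W j)) →
        (∀ i i' : Fin k, i < i' → GRegular G γ (W i) (W i')) →
        (∀ i i' : Fin k, i < i' → H.Adj i i' → η ≤ gdensity G (W i) (W i')) →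
        (∀ i i' : Fin k, i < i' → ¬ H.Adj i i' → gdensity G (W i) (W i') ≤ 1 - η) →
        δ * ∏ i : Fin k, ((W i).card : ℝ) ≤
          (((univ : Finset (Fin k → V)).filter fun w =>
            (∀ i : Fin k, w i ∈ W i) ∧
            ∀ i i' : Fin k, i < i' → (G.Adj (w i) (w i') ↔ H.Adj i i')).card : ℝ) := by
  obtain ⟨γ₀, δ, hγ₀, hδ, hmain⟩ := exists_count_lower_bound (η / 2) (by positivity) k
  refine ⟨min γ₀ (η / 2), δ, by positivity, hδ, ?_⟩
  intro V _ _ G H W _ hreg hedge hnonedge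
  have key := hmain V (fun i j a b => G.Adj a b ↔ H.Adj i j) W fun i j hij =>
    (hreg i j hij).lowerRegular (min_le_right _ _) (min_le_left _ _) (H.Adj i j)
      (hedge i j hij) (hnonedge i j hij)
  refine key.trans (le_of_eq ?_)
  unfold copies
  congr!
end

section
/- Fix an integer r ≥ 2. For every ε > 0 and positive integer m, there exists an integer CM = CM(m, ε) with the following property: if G is an r-graph with n ≥ CM vertices, and A is an equipartition of the vertex set of G of order at most m, then there exists a refinement B of A of order k, where m ≤ k ≤ CM, which is an ε-regular partition. -/
/-!
The proof is an energy increment argument, run with an approximation error instead of an energy.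
Partitions are encoded as labellings `p : V → Fin k`. The potential of `p` is the squared `L²`
distance, summed over all colours, between the indicator function of a colour on `V × V` and the
step function `stepDensity` whose values are the densities between parts. It lies between `0` and
`r n²`, and the densities are the best step function on the blocks of `p` (`err_dens_le`), so the
potential of a partition is bounded by the error of any step function on its blocks.

If more than `ε k²` pairs of an equitable labelling are irregular, choose witnessing subsets for
each of them and replace the density by that of the witnessing pair on their product. This lowers
the error by at least `ε⁵ n² / 4` (`exists_gain`), and the new step function is constant on the
atoms generated by the old parts and the witnesses. These atoms have unequal sizes, so each old
part is cut instead into `N` nearly equal pieces, all of them inside atoms apart from an exceptional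
set of at most `4 ^ (k²) n / N` vertices (`exists_refine`, based on `Finpartition.equitabilise`).
The values of the step function on exceptional vertices are irrelevant up to an error `ε⁵ n² / 8`
when `N` is large. Hence the potential drops by `ε⁵ n² / 8` while the partition is refined
equitably (`exists_step`), which can happen only a bounded number of times
(`exists_regular_of_err_le`). Starting from the given equipartition with each part cut into `m`
pieces gives the theorem.
-/

open Finset
open scoped Classical

/-- The `ρ`-density `d_ρ(A,B) = e_ρ(A,B)/(|A||B|)` of a pair of (disjoint) vertex sets in
an `r`-graph with edge-coloring `c`. -/
noncomputable def mdensity {V : Type*} [DecidableEq V] {r : ℕ} (c : Sym2 V → Fin r)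
    (ρ : Fin r) (A B : Finset V) : ℝ :=
  (((A ×ˢ B).filter fun p => c s(p.1, p.2) = ρ).card : ℝ) / ((A.card : ℝ) * (B.card : ℝ))

/-- A pair `(A,B)` is `γ`-regular in an `r`-graph: for all sufficiently large subpairs,
every color density is within `γ` of the corresponding density of `(A,B)`. -/
def MRegular {V : Type*} [DecidableEq V] {r : ℕ} (c : Sym2 V → Fin r) (γ : ℝ)
    (A B : Finset V) : Prop :=
  ∀ A' ⊆ A, ∀ B' ⊆ B, γ * A.card ≤ A'.card → γ * B.card ≤ B'.card →
    ∀ ρ : Fin r, |mdensity c ρ A' B' - mdensity c ρ A B| ≤ γ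

/-- A `γ`-regular partition of an `r`-graph: an equipartition of the vertex set in which
all but at most `γ k²` of the pairs `i < j` are `γ`-regular. -/
def MRegularPartition {V : Type*} [Fintype V] [DecidableEq V] {r : ℕ} (c : Sym2 V → Fin r)
    (γ : ℝ) {k : ℕ} (P : Fin k → Finset V) : Prop :=
  IsEquipartition (univ : Finset V) P ∧
  (((univ : Finset (Fin k × Fin k)).filter fun p =>
      p.1 < p.2 ∧ ¬ MRegular c γ (P p.1) (P p.2)).card : ℝ) ≤ γ * (k : ℝ) ^ 2

/-- The part with label `i` of the partition of `V` encoded by the labelling `p`. -/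
def fib {V : Type*} [Fintype V] {k : ℕ} (p : V → Fin k) (i : Fin k) : Finset V :=
  univ.filter fun x => p x = i

theorem mem_fib {V : Type*} [Fintype V] {k : ℕ} (p : V → Fin k) (i : Fin k) (x : V) :
    x ∈ fib p i ↔ p x = i := by
  simp [fib]

/-- The labelling `p` has nearly equal parts (empty parts are allowed). -/
def Equi {V : Type*} [Fintype V] {k : ℕ} (p : V → Fin k) : Prop :=
  ∀ i j, (fib p i).card ≤ (fib p j).card + 1

/-- Indicator of colour `ρ`, as a real function of two vertices. -/
noncomputable def ind {V : Type*} {r : ℕ} (c : Sym2 V → Fin r) (ρ : Fin r) (x y : V) : ℝ :=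
  if c s(x, y) = ρ then 1 else 0

/-- Total squared error of approximating the colour indicators by `h`. -/
noncomputable def err {V : Type*} [Fintype V] {r : ℕ} (c : Sym2 V → Fin r)
    (h : Fin r → V → V → ℝ) : ℝ :=
  ∑ ρ, ∑ x, ∑ y, (ind c ρ x y - h ρ x y) ^ 2

/-- The step function taking the `ρ`-density of `(P, Q)` as its value on each pair of parts
`(P, Q)` of the labelling `p` (diagonal pairs included). -/
noncomputable def stepDensity {V : Type*} [Fintype V] [DecidableEq V] {r k : ℕ} (c : Sym2 V → Fin r)
    (p : V → Fin k) (ρ : Fin r) (x y : V) : ℝ :=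
  mdensity c ρ (fib p (p x)) (fib p (p y))

/-! ### Cutting a set into nearly equal pieces -/

/-- A set can be cut into `N` nearly equal pieces such that, outside a small exceptional set `S`,
every piece is contained in a single class of `g`. -/
theorem exists_chop {V L : Type*} [DecidableEq V] [Fintype L] (s : Finset V) (g : V → L) (N : ℕ)
    (hN : 0 < N) (hs : N ≤ s.card) :
    ∃ (q : V → Fin N) (S : Finset V), S.card ≤ Fintype.card L * (s.card / N) ∧
      (∀ j, s.card / N ≤ (s.filter fun x => q x = j).card ∧
        (s.filter fun x => q x = j).card ≤ (s.card + N - 1) / N) ∧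
      ∀ x ∈ s, x ∉ S → ∀ y ∈ s, q y = q x → g y = g x := by
  have hpart : (N - s.card % N) * (s.card / N) + s.card % N * (s.card / N + 1) = s.card := by
    rw [tsub_mul, mul_add, ← add_assoc,
      tsub_add_cancel_of_le (Nat.mul_le_mul_right _ (Nat.mod_lt _ hN).le), mul_one, add_comm,
      Nat.mod_add_div]
  let P : Finpartition s := Finpartition.ofExistsUnique
    ((s.image g).image fun l => s.filter fun y => g y = l)
    (by
      intro t ht
      obtain ⟨l, -, rfl⟩ := Finset.mem_image.1 ht
      exact Finset.filter_subset _ _)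
    (by
      intro x hx
      refine ⟨s.filter fun y => g y = g x, ⟨Finset.mem_image.2 ⟨g x, Finset.mem_image_of_mem g hx,
        rfl⟩, by simp [hx]⟩, ?_⟩
      rintro t ⟨ht, hxt⟩
      obtain ⟨l, -, rfl⟩ := Finset.mem_image.1 ht
      rw [(Finset.mem_filter.1 hxt).2])
    (by
      intro h
      obtain ⟨l, hl, hl'⟩ := Finset.mem_image.1 h
      obtain ⟨x, hx, rfl⟩ := Finset.mem_image.1 hl
      have : x ∈ s.filter fun y => g y = g x := by simp [hx]
      rw [hl'] at this
      simp at this)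
  have hPg : ∀ t ∈ P.parts, ∀ x ∈ t, ∀ y ∈ t, g y = g x := by
    intro t ht x hx y hy
    obtain ⟨l, -, rfl⟩ := Finset.mem_image.1 (show t ∈ (s.image g).image _ from ht)
    rw [(Finset.mem_filter.1 hx).2, (Finset.mem_filter.1 hy).2]
  have hPcard : P.parts.card ≤ Fintype.card L :=
    (Finset.card_image_le (s := s.image g)).trans (Finset.card_le_univ _)
  let Q := P.equitabilise hpart
  have hm : s.card / N ≠ 0 := (Nat.div_pos hs hN).ne'
  have hQcard : Q.parts.card = N := by
    rw [P.card_parts_equitabilise hpart hm, Nat.sub_add_cancel (Nat.mod_lt _ hN).le]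
  let e : Q.parts ≃ Fin N := Q.parts.equivFinOfCardEq hQcard
  let q : V → Fin N := fun x => if h : x ∈ s then e ⟨Q.part x, Q.part_mem.2 h⟩ else ⟨0, hN⟩
  have hq : ∀ x ∈ s, ∀ u : Q.parts, q x = e u ↔ x ∈ u.1 := by
    intro x hx u
    simp only [q, hx, dif_pos, e.apply_eq_iff_eq, Subtype.ext_iff]
    exact Q.part_eq_iff_mem u.2
  refine ⟨q, P.parts.biUnion fun t => t \ {u ∈ Q.parts | u ⊆ t}.biUnion id, ?_, ?_, ?_⟩
  · refine (Finset.card_biUnion_le_card_mul _ _ (s.card / N)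
      fun t ht => P.card_parts_equitabilise_subset_le hpart ht).trans ?_
    exact Nat.mul_le_mul_right _ hPcard
  · intro j
    obtain ⟨u, rfl⟩ := e.surjective j
    have hu : (s.filter fun x => q x = e u) = u.1 := by
      ext x
      rw [Finset.mem_filter]
      constructor
      · rintro ⟨hx, h⟩
        exact (hq x hx u).1 h
      · intro h
        have hx := Q.le u.2 h
        exact ⟨hx, (hq x hx u).2 h⟩
    rw [hu]
    rcases P.card_eq_of_mem_parts_equitabilise (h := hpart) u.2 with h | h
    · rw [h]
      exact ⟨le_rfl, Nat.div_le_div_right (by omega)⟩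
    · rw [h]
      refine ⟨Nat.le_succ _, ?_⟩
      -- a piece of the larger size exists only if `N` does not divide `s.card`
      have hb := P.card_filter_equitabilise_big hpart
      have hpos : 0 < s.card % N := by
        rw [← hb]
        exact Finset.card_pos.2 ⟨u.1, Finset.mem_filter.2 ⟨u.2, h⟩⟩
      rw [Nat.le_div_iff_mul_le hN]
      have := Nat.div_add_mod s.card N
      have h3 : (s.card / N + 1) * N = N * (s.card / N) + N := by ring
      omega
  · intro x hx hxS y hy hqy
    obtain ⟨t, ht, hxt⟩ := P.exists_mem hx
    have h1 : x ∈ {u ∈ Q.parts | u ⊆ t}.biUnion id := by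
      by_contra h
      exact hxS (Finset.mem_biUnion.2 ⟨t, ht, Finset.mem_sdiff.2 ⟨hxt, h⟩⟩)
    obtain ⟨u, hu, hxu⟩ := Finset.mem_biUnion.1 h1
    obtain ⟨huQ, hut⟩ := Finset.mem_filter.1 hu
    have h2 := (hq x hx ⟨u, huQ⟩).2 hxu
    have h3 := (hq y hy ⟨u, huQ⟩).1 (hqy.trans h2)
    exact hPg t ht x hxt y (hut h3)

theorem card_le_of_equi {V : Type*} [Fintype V] {k : ℕ} (p : V → Fin k) (hp : Equi p)
    (i : Fin k) : Fintype.card V ≤ k * ((fib p i).card + 1) := by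
  have h : (univ : Finset V).card = ∑ j : Fin k, (fib p j).card :=
    Finset.card_eq_sum_card_fiberwise (f := p) (t := univ) (fun x _ => by simp)
  rw [Finset.card_univ] at h
  rw [h]
  calc _ ≤ ∑ j : Fin k, ((fib p i).card + 1) := Finset.sum_le_sum fun j _ => hp j i
    _ = _ := by simp

/-- Cutting every part of an equitable labelling into `N` pieces gives an equitable labelling,
and outside a small exceptional set the new partition refines the classes of `g`. -/
theorem exists_refine {V L : Type*} [Fintype V] [DecidableEq V] [Fintype L] {k : ℕ}
    (p : V → Fin k) (hp : Equi p) (g : V → L) (N : ℕ) (hN : 0 < N)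
    (hn : k * (N + 1) ≤ Fintype.card V) :
    ∃ (p' : V → Fin (k * N)) (S : Finset V), Equi p' ∧
      N * S.card ≤ Fintype.card L * Fintype.card V ∧
      (∀ x y, p' x = p' y → p x = p y) ∧
      ∀ x, x ∉ S → ∀ y, p' y = p' x → g y = g x := by
  have hbig : ∀ i, N ≤ (fib p i).card := by
    intro i
    have hk : 0 < k := i.pos
    have := Nat.le_of_mul_le_mul_left (hn.trans (card_le_of_equi p hp i)) hk
    omega
  choose q S hS hq hg using fun i => exists_chop (fib p i) g N hN (hbig i)
  have hfib : ∀ i j, fib (fun x => finProdFinEquiv (p x, q (p x) x)) (finProdFinEquiv (i, j))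
      = (fib p i).filter fun x => q i x = j := by
    intro i j
    ext x
    simp only [mem_fib, Finset.mem_filter, EmbeddingLike.apply_eq_iff_eq, Prod.mk.injEq]
    constructor
    · rintro ⟨rfl, h⟩; exact ⟨rfl, h⟩
    · rintro ⟨rfl, h⟩; exact ⟨rfl, h⟩
  refine ⟨fun x => finProdFinEquiv (p x, q (p x) x), univ.biUnion S, ?_, ?_, ?_, ?_⟩
  · intro a b
    obtain ⟨⟨i, j⟩, rfl⟩ := finProdFinEquiv.surjective a
    obtain ⟨⟨i', j'⟩, rfl⟩ := finProdFinEquiv.surjective b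
    rw [hfib, hfib]
    refine (hq i j).2.trans (le_trans ?_ (Nat.add_le_add_right (hq i' j').1 1))
    rw [← Nat.add_div_right _ hN]
    have := hp i i'
    exact Nat.div_le_div_right (by omega)
  · have h : (univ : Finset V).card = ∑ j : Fin k, (fib p j).card :=
      Finset.card_eq_sum_card_fiberwise (f := p) (t := univ) (fun x _ => by simp)
    rw [Finset.card_univ] at h
    rw [h, Finset.mul_sum]
    refine (Nat.mul_le_mul_left N Finset.card_biUnion_le).trans ?_
    rw [Finset.mul_sum]
    refine Finset.sum_le_sum fun i _ => ?_
    calc N * (S i).card ≤ N * (Fintype.card L * ((fib p i).card / N)) :=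
          Nat.mul_le_mul_left N (hS i)
      _ = Fintype.card L * (N * ((fib p i).card / N)) := by ring
      _ ≤ _ := Nat.mul_le_mul_left _ (Nat.mul_div_le _ _)
  · intro x y h
    have := finProdFinEquiv.injective h
    exact (Prod.mk.inj this).1
  · intro x hx y h
    have := Prod.mk.inj (finProdFinEquiv.injective h)
    refine hg (p x) x ((mem_fib _ _ _).2 rfl) ?_ y ((mem_fib _ _ _).2 this.1) ?_
    · intro h'
      exact hx (Finset.mem_biUnion.2 ⟨p x, Finset.mem_univ _, h'⟩)
    · have h2 := this.2
      rwa [this.1] at h2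

/-! ### Densities as best approximations -/

theorem sum_ind {V : Type*} [DecidableEq V] {r : ℕ} (c : Sym2 V → Fin r) (ρ : Fin r)
    (A B : Finset V) :
    ∑ x ∈ A, ∑ y ∈ B, ind c ρ x y = mdensity c ρ A B * (A.card * B.card) := by
  rw [← Finset.sum_product' (s := A) (t := B) (f := fun x y => ind c ρ x y)]
  simp only [ind, mdensity]
  rw [Finset.sum_boole]
  by_cases h : (A.card : ℝ) * B.card = 0
  · have h0 : (A ×ˢ B) = ∅ := by
      rw [← Finset.card_eq_zero, Finset.card_product]
      exact_mod_cast h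
    simp [h0]
  · rw [div_mul_cancel₀ _ h]

theorem sum_sq {V : Type*} [DecidableEq V] {r : ℕ} (c : Sym2 V → Fin r) (ρ : Fin r)
    (A B : Finset V) (t : ℝ) :
    ∑ x ∈ A, ∑ y ∈ B, (ind c ρ x y - t) ^ 2 =
      ∑ x ∈ A, ∑ y ∈ B, (ind c ρ x y - mdensity c ρ A B) ^ 2 +
        (A.card * B.card) * (t - mdensity c ρ A B) ^ 2 := by
  have key : ∀ t : ℝ, ∑ x ∈ A, ∑ y ∈ B, (ind c ρ x y - t) ^ 2 =
      ∑ x ∈ A, ∑ y ∈ B, (ind c ρ x y) ^ 2 - 2 * t * (mdensity c ρ A B * (A.card * B.card)) +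
        (A.card * B.card) * t ^ 2 := by
    intro t
    rw [← sum_ind, Finset.mul_sum]
    simp_rw [Finset.mul_sum]
    rw [← Finset.sum_sub_distrib]
    simp_rw [← Finset.sum_sub_distrib]
    have : (A.card : ℝ) * B.card * t ^ 2 = ∑ x ∈ A, ∑ y ∈ B, t ^ 2 := by
      simp [mul_assoc]
    rw [this, ← Finset.sum_add_distrib]
    simp_rw [← Finset.sum_add_distrib]
    refine Finset.sum_congr rfl fun x _ => Finset.sum_congr rfl fun y _ => ?_
    ring
  rw [key t, key (mdensity c ρ A B)]
  ring

theorem sum_blocks {V : Type*} [Fintype V] {k : ℕ} (p : V → Fin k) (F : V → V → ℝ) :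
    ∑ x, ∑ y, F x y = ∑ i, ∑ j, ∑ x ∈ fib p i, ∑ y ∈ fib p j, F x y := by
  have h : ∀ G : V → ℝ, ∑ x, G x = ∑ i, ∑ x ∈ fib p i, G x := fun G =>
    (Finset.sum_fiberwise univ p G).symm
  rw [h]
  refine Finset.sum_congr rfl fun i _ => ?_
  rw [Finset.sum_comm (s := univ)]
  exact Finset.sum_congr rfl fun x _ => h _

theorem err_blocks {V : Type*} [Fintype V] {r k : ℕ} (c : Sym2 V → Fin r) (p : V → Fin k)
    (h : Fin r → V → V → ℝ) :
    err c h = ∑ ρ, ∑ i, ∑ j, ∑ x ∈ fib p i, ∑ y ∈ fib p j, (ind c ρ x y - h ρ x y) ^ 2 :=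
  Finset.sum_congr rfl fun _ _ => sum_blocks p _

/-- Among all step functions on the blocks of `p`, the densities minimise the error. -/
theorem err_dens_le {V : Type*} [Fintype V] [DecidableEq V] {r k : ℕ} (c : Sym2 V → Fin r)
    (p : V → Fin k) (H : Fin r → Fin k → Fin k → ℝ) :
    err c (stepDensity c p) ≤ err c fun ρ x y => H ρ (p x) (p y) := by
  rw [err_blocks c p, err_blocks c p]
  refine Finset.sum_le_sum fun ρ _ => Finset.sum_le_sum fun i _ => Finset.sum_le_sum fun j _ => ?_
  have h1 : ∀ G : Fin k → Fin k → ℝ,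
      ∑ x ∈ fib p i, ∑ y ∈ fib p j, (ind c ρ x y - G (p x) (p y)) ^ 2 =
      ∑ x ∈ fib p i, ∑ y ∈ fib p j, (ind c ρ x y - G i j) ^ 2 := fun G =>
    Finset.sum_congr rfl fun x hx => Finset.sum_congr rfl fun y hy => by
      rw [(mem_fib _ _ _).1 hx, (mem_fib _ _ _).1 hy]
  simp only [stepDensity]
  rw [h1 fun a b => mdensity c ρ (fib p a) (fib p b), h1 (H ρ),
    sum_sq c ρ (fib p i) (fib p j) (H ρ i j)]
  exact le_add_of_nonneg_right (by positivity)

theorem mdensity_nonneg {V : Type*} [DecidableEq V] {r : ℕ} (c : Sym2 V → Fin r) (ρ : Fin r)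
    (A B : Finset V) : 0 ≤ mdensity c ρ A B := by
  unfold mdensity
  positivity

theorem mdensity_le_one {V : Type*} [DecidableEq V] {r : ℕ} (c : Sym2 V → Fin r) (ρ : Fin r)
    (A B : Finset V) : mdensity c ρ A B ≤ 1 := by
  unfold mdensity
  refine div_le_one_of_le₀ ?_ (by positivity)
  have := Finset.card_filter_le (A ×ˢ B) fun p => c s(p.1, p.2) = ρ
  rw [Finset.card_product] at this
  exact_mod_cast this

theorem ind_sub_sq_le {V : Type*} {r : ℕ} (c : Sym2 V → Fin r) (ρ : Fin r) (x y : V) {t : ℝ}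
    (h0 : 0 ≤ t) (h1 : t ≤ 1) : (ind c ρ x y - t) ^ 2 ≤ 1 := by
  unfold ind
  split_ifs <;> nlinarith

theorem err_nonneg {V : Type*} [Fintype V] {r : ℕ} (c : Sym2 V → Fin r)
    (h : Fin r → V → V → ℝ) : 0 ≤ err c h := by
  unfold err
  positivity

theorem err_dens_le_card {V : Type*} [Fintype V] [DecidableEq V] {r k : ℕ} (c : Sym2 V → Fin r)
    (p : V → Fin k) : err c (stepDensity c p) ≤ r * (Fintype.card V : ℝ) ^ 2 := by
  unfold err
  calc _ ≤ ∑ ρ : Fin r, ∑ x : V, ∑ y : V, (1 : ℝ) :=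
        Finset.sum_le_sum fun ρ _ => Finset.sum_le_sum fun x _ => Finset.sum_le_sum fun y _ =>
          ind_sub_sq_le c ρ x y (mdensity_nonneg _ _ _ _) (mdensity_le_one _ _ _ _)
    _ = _ := by simp [pow_two]

/-- Changing the approximation arbitrarily (within `[0, 1]`) on the pairs meeting `S` costs at most
`2 r |S| n`. -/
theorem err_le_add_of_eq_off {V : Type*} [Fintype V] [DecidableEq V] {r : ℕ}
    (c : Sym2 V → Fin r) (h h' : Fin r → V → V → ℝ) (S : Finset V)
    (h0 : ∀ ρ x y, 0 ≤ h' ρ x y) (h1 : ∀ ρ x y, h' ρ x y ≤ 1)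
    (heq : ∀ ρ x y, x ∉ S → y ∉ S → h' ρ x y = h ρ x y) :
    err c h' ≤ err c h + 2 * r * S.card * Fintype.card V := by
  have : (2 * r * S.card * Fintype.card V : ℝ) = ∑ ρ : Fin r, ∑ x : V, ∑ y : V,
      ((if x ∈ S then (1 : ℝ) else 0) + if y ∈ S then 1 else 0) := by
    simp [Finset.sum_add_distrib]
    ring
  unfold err
  rw [this, ← Finset.sum_add_distrib]
  simp_rw [← Finset.sum_add_distrib]
  refine Finset.sum_le_sum fun ρ _ => Finset.sum_le_sum fun x _ => Finset.sum_le_sum fun y _ => ?_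
  have hle := ind_sub_sq_le c ρ x y (h0 ρ x y) (h1 ρ x y)
  have hnn := sq_nonneg (ind c ρ x y - h ρ x y)
  by_cases hx : x ∈ S <;> by_cases hy : y ∈ S <;> simp only [hx, hy, if_true, if_false]
  · linarith
  · linarith
  · linarith
  · rw [heq ρ x y hx hy]; linarith

/-! ### The energy increment -/

/-- Modifying a constant approximation `D` on `X × Y` to the density of `(A, B)` on `A × B`
decreases the squared error by exactly `|A| |B| (D - d(A, B))²`. -/
theorem block_gain {V : Type*} [DecidableEq V] {r : ℕ} (c : Sym2 V → Fin r) (ρ : Fin r)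
    (X Y A B : Finset V) (hA : A ⊆ X) (hB : B ⊆ Y) (D : ℝ) :
    ∑ x ∈ X, ∑ y ∈ Y,
        (ind c ρ x y - if x ∈ A ∧ y ∈ B then mdensity c ρ A B else D) ^ 2 +
      (A.card * B.card) * (D - mdensity c ρ A B) ^ 2 =
    ∑ x ∈ X, ∑ y ∈ Y, (ind c ρ x y - D) ^ 2 := by
  have h1 := sum_sq c ρ A B D
  have h2 : ∑ x ∈ X, ∑ y ∈ Y, ((ind c ρ x y - D) ^ 2 -
      (ind c ρ x y - if x ∈ A ∧ y ∈ B then mdensity c ρ A B else D) ^ 2) =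
      ∑ x ∈ A, ∑ y ∈ B, ((ind c ρ x y - D) ^ 2 - (ind c ρ x y - mdensity c ρ A B) ^ 2) := by
    symm
    refine Eq.trans (Finset.sum_congr rfl fun x hx => ?_)
      (Finset.sum_subset hA fun x _ hx => ?_)
    · refine Eq.trans (Finset.sum_congr rfl fun y hy => ?_)
        (Finset.sum_subset hB fun y _ hy => ?_)
      · simp [hx, hy]
      · simp [hy]
    · exact Finset.sum_eq_zero fun y _ => by simp [hx]
  simp only [Finset.sum_sub_distrib] at h2
  linarith

/-- If more than `ε k²` pairs are irregular, then refining each part by the sets witnessing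
irregularity allows an approximation of the colours with substantially smaller error. -/
theorem exists_gain {V : Type*} [Fintype V] [DecidableEq V] {r k : ℕ} (c : Sym2 V → Fin r)
    {ε : ℝ} (hε : 0 < ε) (p : V → Fin k) (hp : Equi p) (hn : 2 * k ≤ Fintype.card V)
    (hirr : ε * (k : ℝ) ^ 2 < (((univ : Finset (Fin k × Fin k)).filter fun q =>
      q.1 < q.2 ∧ ¬ MRegular c ε (fib p q.1) (fib p q.2)).card : ℝ)) :
    ∃ (g : V → (Fin k × Fin k → Bool × Bool)) (h : Fin r → V → V → ℝ),
      (∀ ρ x y, 0 ≤ h ρ x y) ∧ (∀ ρ x y, h ρ x y ≤ 1) ∧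
      (∀ ρ x x' y y', p x = p x' → g x = g x' → p y = p y' → g y = g y' →
        h ρ x y = h ρ x' y') ∧
      err c h + ε ^ 5 / 4 * (Fintype.card V : ℝ) ^ 2 ≤ err c (stepDensity c p) := by
  set n : ℝ := (Fintype.card V : ℝ) with hndef
  have hwit : ∀ i j, ∃ A ⊆ fib p i, ∃ B ⊆ fib p j, ¬ MRegular c ε (fib p i) (fib p j) →
      ε ^ 4 * ((fib p i).card * (fib p j).card) ≤
        ∑ ρ, (A.card * B.card) *
          (mdensity c ρ (fib p i) (fib p j) - mdensity c ρ A B) ^ 2 := by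
    intro i j
    by_cases hreg : MRegular c ε (fib p i) (fib p j)
    · exact ⟨∅, Finset.empty_subset _, ∅, Finset.empty_subset _, fun h => absurd hreg h⟩
    · have hreg' := hreg
      unfold MRegular at hreg'
      push Not at hreg'
      obtain ⟨A, hA, B, hB, hAc, hBc, ρ, hρ⟩ := hreg'
      refine ⟨A, hA, B, hB, fun _ => ?_⟩
      refine le_trans ?_ (Finset.single_le_sum (f := fun ρ => ((A.card : ℝ) * B.card) *
          (mdensity c ρ (fib p i) (fib p j) - mdensity c ρ A B) ^ 2)
          (fun ρ _ => by positivity) (Finset.mem_univ ρ))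
      have hsq : ε ^ 2 ≤ (mdensity c ρ (fib p i) (fib p j) - mdensity c ρ A B) ^ 2 := by
        rw [← sq_abs (_ - _), abs_sub_comm]
        exact pow_le_pow_left₀ hε.le hρ.le 2
      calc ε ^ 4 * ((fib p i).card * (fib p j).card : ℝ)
          = ((ε * (fib p i).card) * (ε * (fib p j).card)) * ε ^ 2 := by ring
        _ ≤ _ := by gcongr
  choose A hA B hB hAB using hwit
  refine ⟨fun x ij => (decide (x ∈ A ij.1 ij.2), decide (x ∈ B ij.1 ij.2)),
    fun ρ x y => if x ∈ A (p x) (p y) ∧ y ∈ B (p x) (p y)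
      then mdensity c ρ (A (p x) (p y)) (B (p x) (p y))
      else mdensity c ρ (fib p (p x)) (fib p (p y)), ?_, ?_, ?_, ?_⟩
  · intro ρ x y
    dsimp only
    split_ifs <;> exact mdensity_nonneg _ _ _ _
  · intro ρ x y
    dsimp only
    split_ifs <;> exact mdensity_le_one _ _ _ _
  · intro ρ x x' y y' hpx hgx hpy hgy
    have h1 := congrFun hgx (p x', p y')
    have h2 := congrFun hgy (p x', p y')
    simp only [Prod.mk.injEq, decide_eq_decide] at h1 h2
    simp only [hpx, hpy, h1.1, h2.2]
  · -- split the error into blocks and sum the exact gain of each block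
    have hblock : err c (stepDensity c p) = err c (fun ρ x y =>
        if x ∈ A (p x) (p y) ∧ y ∈ B (p x) (p y)
        then mdensity c ρ (A (p x) (p y)) (B (p x) (p y))
        else mdensity c ρ (fib p (p x)) (fib p (p y))) +
        ∑ i, ∑ j, ∑ ρ, ((A i j).card * (B i j).card : ℝ) *
          (mdensity c ρ (fib p i) (fib p j) - mdensity c ρ (A i j) (B i j)) ^ 2 := by
      have hcomm : ∑ i, ∑ j, ∑ ρ, ((A i j).card * (B i j).card : ℝ) *
          (mdensity c ρ (fib p i) (fib p j) - mdensity c ρ (A i j) (B i j)) ^ 2 =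
          ∑ ρ, ∑ i, ∑ j, ((A i j).card * (B i j).card : ℝ) *
          (mdensity c ρ (fib p i) (fib p j) - mdensity c ρ (A i j) (B i j)) ^ 2 := by
        rw [Finset.sum_comm (s := (univ : Finset (Fin r)))]
        exact Finset.sum_congr rfl fun i _ => Finset.sum_comm
      rw [hcomm, err_blocks c p, err_blocks c p, ← Finset.sum_add_distrib]
      refine Finset.sum_congr rfl fun ρ _ => ?_
      rw [← Finset.sum_add_distrib]
      refine Finset.sum_congr rfl fun i _ => ?_
      rw [← Finset.sum_add_distrib]
      refine Finset.sum_congr rfl fun j _ => ?_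
      have h1 : ∀ G : Fin k → Fin k → V → V → ℝ,
          ∑ x ∈ fib p i, ∑ y ∈ fib p j, (ind c ρ x y - G (p x) (p y) x y) ^ 2 =
          ∑ x ∈ fib p i, ∑ y ∈ fib p j, (ind c ρ x y - G i j x y) ^ 2 := fun G =>
        Finset.sum_congr rfl fun x hx => Finset.sum_congr rfl fun y hy => by
          rw [(mem_fib _ _ _).1 hx, (mem_fib _ _ _).1 hy]
      simp only [stepDensity]
      rw [h1 fun a b _ _ => mdensity c ρ (fib p a) (fib p b),
        h1 fun a b x y => if x ∈ A a b ∧ y ∈ B a b then mdensity c ρ (A a b) (B a b)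
          else mdensity c ρ (fib p a) (fib p b)]
      exact (block_gain c ρ _ _ _ _ (hA i j) (hB i j) _).symm
    rw [hblock]
    refine add_le_add le_rfl ?_
    set I := (univ : Finset (Fin k × Fin k)).filter fun q =>
      q.1 < q.2 ∧ ¬ MRegular c ε (fib p q.1) (fib p q.2) with hI
    have hk : 0 < k := by
      by_contra h
      have hk0 : k = 0 := by omega
      subst hk0
      simp only [Nat.cast_zero, ne_eq, OfNat.ofNat_ne_zero, not_false_eq_true, zero_pow, mul_zero,
        Nat.cast_pos, Finset.card_pos] at hirr
      obtain ⟨q, -⟩ := hirr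
      exact q.1.elim0
    have hk' : (0 : ℝ) < k := by exact_mod_cast hk
    have hsize : ∀ i, n / (2 * k) ≤ (fib p i).card := by
      intro i
      have h1 := card_le_of_equi p hp i
      have h2 : 1 ≤ (fib p i).card := by
        have := Nat.le_of_mul_le_mul_left ((mul_comm k 2).le.trans (hn.trans h1)) hk
        omega
      have h3 : Fintype.card V ≤ k * (2 * (fib p i).card) :=
        h1.trans (Nat.mul_le_mul_left k (by omega))
      rw [div_le_iff₀ (by positivity)]
      have h4 : n ≤ k * (2 * (fib p i).card) := by rw [hndef]; exact_mod_cast h3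
      linarith
    calc ε ^ 5 / 4 * n ^ 2 = (ε * k ^ 2) * (ε ^ 4 * ((n / (2 * k)) * (n / (2 * k)))) := by
          field_simp
          ring
      _ ≤ I.card * (ε ^ 4 * ((n / (2 * k)) * (n / (2 * k)))) := by gcongr
      _ = ∑ q ∈ I, ε ^ 4 * ((n / (2 * k)) * (n / (2 * k))) := by simp
      _ ≤ ∑ q ∈ I, ∑ ρ, ((A q.1 q.2).card * (B q.1 q.2).card : ℝ) *
          (mdensity c ρ (fib p q.1) (fib p q.2) -
            mdensity c ρ (A q.1 q.2) (B q.1 q.2)) ^ 2 := by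
          refine Finset.sum_le_sum fun q hq => le_trans ?_ (hAB q.1 q.2 (Finset.mem_filter.1 hq).2.2)
          have := hsize q.1
          have := hsize q.2
          gcongr
      _ ≤ ∑ q : Fin k × Fin k, ∑ ρ, ((A q.1 q.2).card * (B q.1 q.2).card : ℝ) *
          (mdensity c ρ (fib p q.1) (fib p q.2) -
            mdensity c ρ (A q.1 q.2) (B q.1 q.2)) ^ 2 :=
          Finset.sum_le_sum_of_subset_of_nonneg (Finset.subset_univ _)
            fun q _ _ => Finset.sum_nonneg fun ρ _ => by positivity
      _ = _ := Fintype.sum_prod_type _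

/-- One refinement step: an equitable but irregular labelling has an equitable refinement into
`k * N` parts whose density error is smaller by `ε ^ 5 / 8 * n ^ 2`. -/
theorem exists_step {V : Type*} [Fintype V] [DecidableEq V] {r k : ℕ} (c : Sym2 V → Fin r)
    {ε : ℝ} (hε : 0 < ε) (p : V → Fin k) (hp : Equi p) (N : ℕ) (hN : 0 < N)
    (hNbig : 16 * r * (4 : ℝ) ^ (k * k) ≤ ε ^ 5 * N)
    (hn : k * (N + 1) ≤ Fintype.card V)
    (hirr : ε * (k : ℝ) ^ 2 < (((univ : Finset (Fin k × Fin k)).filter fun q =>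
      q.1 < q.2 ∧ ¬ MRegular c ε (fib p q.1) (fib p q.2)).card : ℝ)) :
    ∃ p' : V → Fin (k * N), Equi p' ∧ (∀ x y, p' x = p' y → p x = p y) ∧
      err c (stepDensity c p') + ε ^ 5 / 8 * (Fintype.card V : ℝ) ^ 2 ≤
        err c (stepDensity c p) := by
  have hn2 : 2 * k ≤ Fintype.card V := by
    refine le_trans ?_ hn
    rw [mul_comm]
    exact Nat.mul_le_mul_left k (by omega)
  obtain ⟨g, h, h0, h1, hinv, hgain⟩ := exists_gain c hε p hp hn2 hirr
  obtain ⟨p', S, hp', hS, href, hg⟩ := exists_refine p hp g N hN hn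
  refine ⟨p', hp', href, ?_⟩
  rcases isEmpty_or_nonempty V with hV | ⟨⟨x₀⟩⟩
  · have e1 : err c (stepDensity c p') = 0 := by simp [err]
    have e2 : Fintype.card V = 0 := Fintype.card_eq_zero
    rw [e1, e2]
    simpa using err_nonneg c _
  -- a representative of every part, chosen outside `S` whenever possible
  have hrep : ∀ u, ∃ z, ∀ x, x ∉ S → p' x = u → p' z = u := by
    intro u
    by_cases hu : ∃ x, x ∉ S ∧ p' x = u
    · obtain ⟨z, hz, hzu⟩ := hu
      exact ⟨z, fun _ _ _ => hzu⟩
    · exact ⟨x₀, fun x hx hxu => absurd ⟨x, hx, hxu⟩ hu⟩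
  choose R hR using hrep
  have hopt := err_dens_le c p' fun ρ u v => h ρ (R u) (R v)
  have hcmp := err_le_add_of_eq_off c h (fun ρ x y => h ρ (R (p' x)) (R (p' y))) S
    (fun _ _ _ => h0 _ _ _) (fun _ _ _ => h1 _ _ _) (by
      intro ρ x y hx hy
      have hx' := hR (p' x) x hx rfl
      have hy' := hR (p' y) y hy rfl
      exact hinv ρ _ _ _ _ (href _ _ hx') (hg x hx _ hx') (href _ _ hy') (hg y hy _ hy'))
  have hcardL : Fintype.card (Fin k × Fin k → Bool × Bool) = 4 ^ (k * k) := by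
    simp
  rw [hcardL] at hS
  have hS' : (N : ℝ) * S.card ≤ 4 ^ (k * k) * Fintype.card V := by exact_mod_cast hS
  set n : ℝ := (Fintype.card V : ℝ) with hndef
  have hn0 : 0 ≤ n := by positivity
  have hN' : (0 : ℝ) < N := by exact_mod_cast hN
  have hbad : 2 * r * S.card * n ≤ ε ^ 5 / 8 * n ^ 2 := by
    refine le_of_mul_le_mul_left ?_ hN'
    calc (N : ℝ) * (2 * r * S.card * n) = 2 * r * n * (N * S.card) := by ring
      _ ≤ 2 * r * n * (4 ^ (k * k) * n) := by gcongr
      _ = (16 * r * (4 : ℝ) ^ (k * k)) * (n ^ 2 / 8) := by ring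
      _ ≤ (ε ^ 5 * N) * (n ^ 2 / 8) := by gcongr
      _ = _ := by ring
  linarith

/-- Iteration of `exists_step`: an error below `t` times the guaranteed decrement leaves room for
fewer than `t` steps, after which the labelling must be regular. -/
theorem exists_regular_of_err_le (r : ℕ) {ε : ℝ} (hε : 0 < ε) (t K : ℕ) :
    ∃ CM : ℕ, ∀ (V : Type) [Fintype V] [DecidableEq V] (c : Sym2 V → Fin r),
      CM ≤ Fintype.card V → ∀ (k : ℕ) (p : V → Fin k), k ≤ K → Equi p →
        err c (stepDensity c p) < t * (ε ^ 5 / 8 * (Fintype.card V : ℝ) ^ 2) →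
        ∃ (k' : ℕ) (p' : V → Fin k'), k ≤ k' ∧ k' ≤ CM ∧ (∀ x y, p' x = p' y → p x = p y) ∧
          Equi p' ∧ (((univ : Finset (Fin k' × Fin k')).filter fun q =>
            q.1 < q.2 ∧ ¬ MRegular c ε (fib p' q.1) (fib p' q.2)).card : ℝ) ≤
              ε * (k' : ℝ) ^ 2 := by
  induction t generalizing K with
  | zero =>
    refine ⟨0, fun V _ _ c _ k p _ _ herr => ?_⟩
    have := err_nonneg c (stepDensity c p)
    simp only [Nat.cast_zero, zero_mul] at herr
    linarith
  | succ t ih =>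
    obtain ⟨N₀, hN₀⟩ := exists_nat_ge (16 * r * (4 : ℝ) ^ (K * K) / ε ^ 5)
    set N := N₀ + 1 with hNdef
    obtain ⟨CM, hCM⟩ := ih (K * N)
    refine ⟨CM + K * (N + 1), fun V _ _ c hn k p hk hp herr => ?_⟩
    by_cases hreg : (((univ : Finset (Fin k × Fin k)).filter fun q =>
        q.1 < q.2 ∧ ¬ MRegular c ε (fib p q.1) (fib p q.2)).card : ℝ) ≤ ε * (k : ℝ) ^ 2
    · refine ⟨k, p, le_rfl, ?_, fun _ _ h => h, hp, hreg⟩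
      have : K * 1 ≤ K * (N + 1) := Nat.mul_le_mul_left K (by omega)
      omega
    · have hNbig : 16 * r * (4 : ℝ) ^ (k * k) ≤ ε ^ 5 * N := by
        rw [div_le_iff₀ (by positivity)] at hN₀
        calc 16 * r * (4 : ℝ) ^ (k * k) ≤ 16 * r * (4 : ℝ) ^ (K * K) := by
              gcongr
              norm_num
          _ ≤ N₀ * ε ^ 5 := hN₀
          _ ≤ (N : ℝ) * ε ^ 5 := by
              gcongr
              omega
          _ = _ := mul_comm _ _
      have hkN : k * (N + 1) ≤ K * (N + 1) := Nat.mul_le_mul_right _ hk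
      obtain ⟨p₁, hp₁, href₁, herr₁⟩ := exists_step c hε p hp N (by omega) hNbig
        (by omega) (not_le.1 hreg)
      obtain ⟨k', p', hk', hk'CM, href', hp', hreg'⟩ := hCM V c (by omega) (k * N) p₁
        (Nat.mul_le_mul_right _ hk) hp₁ (by push_cast at herr; linarith)
      refine ⟨k', p', le_trans ?_ hk', by omega, fun x y h => href₁ x y (href' x y h), hp', hreg'⟩
      exact Nat.le_mul_of_pos_right k (by omega)

/-- Szemerédi's regularity lemma, refinement version, for `r`-graphs. -/
theorem szemeredi_regularity_refinement_multicolor (r : ℕ) (hr : 2 ≤ r)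
    (ε : ℝ) (hε : 0 < ε) (m : ℕ) (hm : 0 < m) :
    ∃ CM : ℕ, ∀ (V : Type) [Fintype V] [DecidableEq V] (c : Sym2 V → Fin r),
      CM ≤ Fintype.card V →
      ∀ (a : ℕ) (A : Fin a → Finset V), a ≤ m →
        IsEquipartition (univ : Finset V) A →
        ∃ (k : ℕ) (B : Fin k → Finset V),
          m ≤ k ∧ k ≤ CM ∧
          (∀ j : Fin k, ∃ i : Fin a, B j ⊆ A i) ∧
          MRegularPartition c ε B := by
  obtain ⟨t, ht⟩ := exists_nat_gt (r / (ε ^ 5 / 8))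
  obtain ⟨CM, hCM⟩ := exists_regular_of_err_le r hε t (m * m)
  refine ⟨CM + m * (m + 1), fun V _ _ c hn a A ham hA => ?_⟩
  obtain ⟨hdisj, hcover, hequi⟩ := hA
  have hmem : ∀ x, ∃ i, x ∈ A i := by
    intro x
    have : x ∈ univ.biUnion A := by rw [hcover]; exact Finset.mem_univ x
    simpa using this
  choose p₀ hp₀ using hmem
  have hfib : ∀ i, fib p₀ i = A i := by
    intro i
    ext x
    rw [mem_fib]
    constructor
    · rintro rfl
      exact hp₀ x
    · intro hx
      by_contra hne
      exact Finset.disjoint_left.1 (hdisj _ _ hne) (hp₀ x) hx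
  have hE₀ : Equi p₀ := by
    intro i j
    rw [hfib, hfib]
    exact hequi i j
  have hmm : 0 < m * (m + 1) := by positivity
  obtain ⟨x₀⟩ : Nonempty V := Fintype.card_pos_iff.1 (by omega)
  have ha : 0 < a := (p₀ x₀).pos
  have ham' : a * (m + 1) ≤ m * (m + 1) := Nat.mul_le_mul_right _ ham
  -- cutting each of the `a ≥ 1` parts into `m` pieces gives order at least `m`
  obtain ⟨p₁, -, hE₁, -, href₁, -⟩ := exists_refine p₀ hE₀ (fun _ => ()) m hm (by omega)
  have hVpos : (0 : ℝ) < Fintype.card V := by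
    exact_mod_cast Fintype.card_pos_iff.2 ⟨x₀⟩
  have herr : err c (stepDensity c p₁) < t * (ε ^ 5 / 8 * (Fintype.card V : ℝ) ^ 2) := by
    refine (err_dens_le_card c p₁).trans_lt ?_
    rw [div_lt_iff₀ (by positivity)] at ht
    rw [← mul_assoc]
    exact mul_lt_mul_of_pos_right ht (by positivity)
  obtain ⟨k, p, hk, hkCM, href, hE, hreg⟩ := hCM V c (by omega) (a * m) p₁
    (Nat.mul_le_mul_right _ ham) hE₁ herr
  refine ⟨k, fib p, (Nat.le_mul_of_pos_left m ha).trans hk, by omega, ?_, ⟨?_, ?_, hE⟩, hreg⟩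
  · intro j
    rcases (fib p j).eq_empty_or_nonempty with h | ⟨z, hz⟩
    · exact ⟨⟨0, ha⟩, by rw [h]; exact Finset.empty_subset _⟩
    · refine ⟨p₀ z, fun x hx => ?_⟩
      rw [mem_fib] at hx hz
      rw [← hfib, mem_fib]
      exact href₁ _ _ (href _ _ (hx.trans hz.symm))
  · intro i j hij
    refine Finset.disjoint_left.2 fun x hi hj => hij ?_
    rw [mem_fib] at hi hj
    exact hi.symm.trans hj
  · ext x
    simp [mem_fib]
end

section
/- Fix an integer r ≥ 2. For every positive integer m and every function E : ℕ → (0,1), there exist S and δ > 0 with the following property: if G is an r-graph with n ≥ S vertices, then there exist an equipartition A = {V_i : 1 ≤ i ≤ k} of the vertex set of G and subsets V_i' ⊆ V_i (for 1 ≤ i ≤ k) forming an equipartition of their union, satisfying: (1) m ≤ k ≤ S; (2) |V_i'| ≥ δn for all i; (3) every pair (V_i', V_{i'}') with 1 ≤ i < i' ≤ k is E(k)-regular; (4) for all but at most E(0)·k(k−1)/2 of the pairs 1 ≤ i < i' ≤ k, |d_ρ(V_i, V_{i'}) − d_ρ(V_i', V_{i'}')| < E(0) holds for every color ρ ∈ {1,…,r}.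 -/
/-!
Each colour `ρ` gives a simple graph, so Mathlib's energy-increment step of Szemerédi's lemma can be
applied to one colour at a time. That step cuts every part of an equipartition `P` into the same
number of pieces. For such a refinement `Q`, `sum_dev_le_energy` bounds the total squared deviation
between the densities of the pairs of `P` and those of their subpairs in `Q` by the energy gain, up
to an error of order `1 / s`, where `s` is the part size of `Q`. In particular no colour loses more
than this error, so on large vertex sets the energy summed over all colours rises by a fixed amount
whenever some colour is not uniform. As it is at most `r`, any equipartition has a refinement that
is uniform in every colour (`exists_regular_refinement`).

Iterating this with uniformity `ε k` depending on the number `k` of current parts, and stopping as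
soon as the total energy rises by at most `η`, yields equipartitions `P` and `Q`, with `Q` refining
`P`, uniform for `ε (#P.parts)` and of almost the same energy as `P` (`exists_strong_regular`).

The sets `V_i` are the parts of `P`, and `V_i'` is a random part of `Q` inside `V_i`. As `ε k` is
small compared with `1 / (r k²)`, the expected number of non-uniform pairs `(V_i', V_j')` is at most
`1 / 4`; the expected sum of squared density deviations is controlled by the energy gain `η`. Some
choice therefore makes all pairs uniform and the sum of squared deviations small
(`exists_representatives`), which bounds the number of pairs deviating by `E 0` or more.
-/

open Finset
open scoped Classical

/-! ### Colour graphs and refinements -/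

/-- The simple graph formed by the edges of colour `ρ`. -/
def colorGraph {V : Type*} {r : ℕ} (c : Sym2 V → Fin r) (ρ : Fin r) : SimpleGraph V where
  Adj a b := a ≠ b ∧ c s(a, b) = ρ
  symm := ⟨fun a b h => ⟨h.1.symm, by rw [Sym2.eq_swap]; exact h.2⟩⟩
  loopless := ⟨fun a h => h.1 rfl⟩

noncomputable instance {V : Type*} {r : ℕ} (c : Sym2 V → Fin r) (ρ : Fin r) :
    DecidableRel (colorGraph c ρ).Adj := Classical.decRel _

theorem mdensity_eq {V : Type*} [DecidableEq V] {r : ℕ} (c : Sym2 V → Fin r) (ρ : Fin r)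
    {A B : Finset V} (h : Disjoint A B) :
    mdensity c ρ A B = ((colorGraph c ρ).edgeDensity A B : ℝ) := by
  rw [mdensity, SimpleGraph.edgeDensity_def, SimpleGraph.interedges_def]
  push_cast
  congr 3
  apply Finset.filter_congr
  intro p hp
  rw [mem_product] at hp
  have : p.1 ≠ p.2 := fun e => (Finset.disjoint_left.1 h hp.1) (e ▸ hp.2)
  simp [colorGraph, this]

/-- The parts of `Q` contained in `U`. -/
def subParts {V : Type*} [DecidableEq V] {S : Finset V} (Q : Finpartition S) (U : Finset V) :
    Finset (Finset V) :=
  Q.parts.filter (· ⊆ U)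

/-- `Q` refines `P` and splits every part of `P` into exactly `l` parts. -/
def Refines {V : Type*} [DecidableEq V] {S : Finset V} (P Q : Finpartition S) (l : ℕ) : Prop :=
  Q ≤ P ∧ ∀ U ∈ P.parts, #(subParts Q U) = l

section Refines

variable {V : Type*} [DecidableEq V] {S : Finset V} {P Q R : Finpartition S} {l l' : ℕ}

theorem mem_subParts {U X : Finset V} : X ∈ subParts Q U ↔ X ∈ Q.parts ∧ X ⊆ U := by
  simp [subParts]

theorem exists_subFinpartition (h : Q ≤ P) {U : Finset V} (hU : U ∈ P.parts) :
    ∃ T : Finpartition U, T.parts = subParts Q U := by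
  refine ⟨Q.ofSubset (parts := subParts Q U) (Finset.filter_subset _ _) ?_, rfl⟩
  rw [Finset.sup_eq_biUnion]
  ext x
  simp only [mem_biUnion, mem_subParts, id]
  constructor
  · rintro ⟨X, ⟨-, hX⟩, hx⟩
    exact hX hx
  · intro hx
    obtain ⟨X, hX, hxX⟩ := Q.exists_mem (P.le hU hx)
    obtain ⟨W, hW, hXW⟩ := h hX
    have : W = U := P.disjoint.elim_finset hW hU x (hXW hxX) hx
    exact ⟨X, ⟨hX, this ▸ hXW⟩, hxX⟩

theorem eq_of_mem_subParts {U W X : Finset V} (hU : U ∈ P.parts) (hW : W ∈ P.parts)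
    (h1 : X ∈ subParts Q U) (h2 : X ∈ subParts Q W) : U = W := by
  rw [mem_subParts] at h1 h2
  obtain ⟨x, hx⟩ := Q.nonempty_of_mem_parts h1.1
  exact P.disjoint.elim_finset hU hW x (h1.2 hx) (h2.2 hx)

theorem parts_eq_biUnion (h : Q ≤ P) : Q.parts = P.parts.biUnion (subParts Q) := by
  ext X
  simp only [mem_biUnion, mem_subParts]
  constructor
  · intro hX
    obtain ⟨W, hW, hXW⟩ := h hX
    exact ⟨W, hW, hX, hXW⟩
  · rintro ⟨W, -, hX, -⟩
    exact hX

theorem Refines.card (h : Refines P Q l) : #Q.parts = #P.parts * l := by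
  rw [parts_eq_biUnion h.1, card_biUnion, Finset.sum_congr rfl h.2, sum_const, smul_eq_mul]
  intro U hU W hW hne
  refine Finset.disjoint_left.2 fun X h1 h2 => ?_
  exact hne (eq_of_mem_subParts hU hW h1 h2)

theorem Refines.refl : Refines P P 1 := by
  refine ⟨le_rfl, fun U hU => ?_⟩
  rw [card_eq_one]
  refine ⟨U, ?_⟩
  ext X
  rw [mem_subParts, mem_singleton]
  constructor
  · rintro ⟨hX, hXU⟩
    obtain ⟨x, hx⟩ := P.nonempty_of_mem_parts hX
    exact P.disjoint.elim_finset hX hU x hx (hXU hx)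
  · rintro rfl
    exact ⟨hU, subset_rfl⟩

theorem Refines.trans (h : Refines P Q l) (h' : Refines Q R l') : Refines P R (l * l') := by
  refine ⟨h'.1.trans h.1, fun U hU => ?_⟩
  have : subParts R U = (subParts Q U).biUnion (subParts R) := by
    ext X
    simp only [mem_biUnion, mem_subParts]
    constructor
    · rintro ⟨hX, hXU⟩
      obtain ⟨Y, hY, hXY⟩ := h'.1 hX
      obtain ⟨W, hW, hYW⟩ := h.1 hY
      obtain ⟨x, hx⟩ := R.nonempty_of_mem_parts hX
      have : W = U := P.disjoint.elim_finset hW hU x (hYW (hXY hx)) (hXU hx)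
      exact ⟨Y, ⟨hY, this ▸ hYW⟩, hX, hXY⟩
    · rintro ⟨Y, ⟨hY, hYU⟩, hX, hXY⟩
      exact ⟨hX, hXY.trans hYU⟩
  rw [this, card_biUnion, Finset.sum_congr rfl (g := fun _ => l'), sum_const, smul_eq_mul,
    h.2 U hU]
  · intro Y hY
    exact h'.2 Y (mem_subParts.1 hY).1
  · intro Y hY Z hZ hne
    refine Finset.disjoint_left.2 fun X h1 h2 => ?_
    exact hne (eq_of_mem_subParts (mem_subParts.1 hY).1 (mem_subParts.1 hZ).1 h1 h2)

theorem sum_subParts_le (w : Finset V → Finset V → ℝ) (hw : ∀ X Y, 0 ≤ w X Y) :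
    ∑ p ∈ P.parts.offDiag, ∑ X ∈ subParts Q p.1, ∑ Y ∈ subParts Q p.2, w X Y ≤
      ∑ q ∈ Q.parts.offDiag, w q.1 q.2 := by
  have e : ∀ p ∈ P.parts.offDiag, ∑ X ∈ subParts Q p.1, ∑ Y ∈ subParts Q p.2,
      w X Y =
      ∑ q ∈ subParts Q p.1 ×ˢ subParts Q p.2, w q.1 q.2 :=
    fun p _ => (sum_product _ _ fun q => w q.1 q.2).symm
  rw [sum_congr rfl e, ← sum_biUnion]
  · refine sum_le_sum_of_subset_of_nonneg ?_ fun _ _ _ => hw _ _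
    intro q hq
    simp only [mem_biUnion, mem_product, mem_offDiag] at hq ⊢
    obtain ⟨p, ⟨hp1, hp2, hne⟩, hq1, hq2⟩ := hq
    refine ⟨(mem_subParts.1 hq1).1, (mem_subParts.1 hq2).1, fun e => hne ?_⟩
    exact eq_of_mem_subParts hp1 hp2 hq1 (e ▸ hq2)
  · intro p hp p' hp' hne
    simp only [coe_offDiag, Set.mem_offDiag, mem_coe] at hp hp'
    refine Finset.disjoint_left.2 fun q hq hq' => hne ?_
    rw [mem_product] at hq hq'
    exact Prod.ext (eq_of_mem_subParts hp.1 hp'.1 hq.1 hq'.1)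
      (eq_of_mem_subParts hp.2.1 hp'.2.1 hq.2 hq'.2)

end Refines

/-! ### Energy and refinements -/

/-- If `U`, `W` are split into `l` parts each, all of size `s` or `s + 1`, then the variance of the
densities of the subpairs is, up to an error vanishing with `1 / s`, the gain in the mean square
density. The error comes from weighting all subpairs equally. -/
theorem sum_sq_dev_le {V : Type*} [DecidableEq V] (G : SimpleGraph V) [DecidableRel G.Adj]
    {U W : Finset V} (T : Finpartition U) (T' : Finpartition W) {l s : ℕ} (hs : 0 < s)
    (hT : #T.parts = l) (hT' : #T'.parts = l)
    (hTs : ∀ X ∈ T.parts, s ≤ #X ∧ #X ≤ s + 1) (hTs' : ∀ X ∈ T'.parts, s ≤ #X ∧ #X ≤ s + 1) :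
    ∑ X ∈ T.parts, ∑ Y ∈ T'.parts, ((G.edgeDensity U W : ℝ) - G.edgeDensity X Y) ^ 2 ≤
      ∑ X ∈ T.parts, ∑ Y ∈ T'.parts, (G.edgeDensity X Y : ℝ) ^ 2
        - (l : ℝ) ^ 2 * (G.edgeDensity U W : ℝ) ^ 2 + (l : ℝ) ^ 2 * (4 / (s + 1)) := by
  set d : ℝ := (G.edgeDensity U W : ℝ) with hd
  have hd0 : 0 ≤ d := by rw [hd]; exact_mod_cast G.edgeDensity_nonneg U W
  have hd1 : d ≤ 1 := by rw [hd]; exact_mod_cast G.edgeDensity_le_one U W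
  set S1 : ℝ := ∑ X ∈ T.parts, ∑ Y ∈ T'.parts, (G.edgeDensity X Y : ℝ) with hS1
  have hs' : (0 : ℝ) < s := by exact_mod_cast hs
  have hU : (l : ℝ) * s ≤ #U := by
    rw [← T.sum_card_parts, ← hT]
    exact_mod_cast Finset.card_nsmul_le_sum T.parts _ s (fun X hX => (hTs X hX).1)
  have hW : (l : ℝ) * s ≤ #W := by
    rw [← T'.sum_card_parts, ← hT']
    exact_mod_cast Finset.card_nsmul_le_sum T'.parts _ s (fun X hX => (hTs' X hX).1)
  -- counting edges: `d |U| |W| ≤ (s + 1)² ∑ d(X, Y)`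
  have hE : (#(G.interedges U W) : ℝ) ≤ (s + 1) ^ 2 * S1 := by
    have h1 : #(G.interedges U W) = _ := Rel.card_interedges_finpartition G.Adj T T'
    rw [h1, sum_product, hS1, mul_sum]
    push_cast
    refine sum_le_sum fun X hX => ?_
    rw [mul_sum]
    refine sum_le_sum fun Y hY => ?_
    have hX1 : (s : ℝ) ≤ #X := by exact_mod_cast (hTs X hX).1
    have hX2 : (#X : ℝ) ≤ s + 1 := by exact_mod_cast (hTs X hX).2
    have hY1 : (s : ℝ) ≤ #Y := by exact_mod_cast (hTs' Y hY).1
    have hY2 : (#Y : ℝ) ≤ s + 1 := by exact_mod_cast (hTs' Y hY).2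
    have hXp : (0 : ℝ) < #X := by linarith
    have hYp : (0 : ℝ) < #Y := by linarith
    have e : (#(Rel.interedges G.Adj X Y) : ℝ) = (#X * #Y) * (G.edgeDensity X Y : ℝ) := by
      rw [SimpleGraph.edgeDensity_def, SimpleGraph.interedges]
      push_cast
      field_simp
    have h0 : (0 : ℝ) ≤ G.edgeDensity X Y := by exact_mod_cast G.edgeDensity_nonneg X Y
    rw [e]
    gcongr
    nlinarith
  have hdE : d * (#U * #W) = #(G.interedges U W) := by
    rw [hd, SimpleGraph.edgeDensity_def]
    push_cast
    by_cases h0 : (#U : ℝ) * #W = 0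
    · have : #(G.interedges U W) ≤ #U * #W := G.card_interedges_le_mul U W
      have h2 : (#(G.interedges U W) : ℝ) ≤ #U * #W := by exact_mod_cast this
      have h3 : (0 : ℝ) ≤ #(G.interedges U W) := by positivity
      rw [h0, mul_zero]; linarith
    · exact div_mul_cancel₀ _ h0
  have hmain : d * ((l : ℝ) ^ 2 * s ^ 2) ≤ (s + 1) ^ 2 * S1 := by
    refine le_trans ?_ (hdE.le.trans hE)
    have := mul_le_mul hU hW (by positivity) (by positivity)
    refine mul_le_mul_of_nonneg_left ?_ hd0
    linarith
  have hexp : ∑ X ∈ T.parts, ∑ Y ∈ T'.parts, (d - G.edgeDensity X Y) ^ 2 =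
      ∑ X ∈ T.parts, ∑ Y ∈ T'.parts, (G.edgeDensity X Y : ℝ) ^ 2 - 2 * d * S1
        + (l : ℝ) ^ 2 * d ^ 2 := by
    rw [hS1, mul_sum]
    simp_rw [mul_sum, sub_sq, sum_add_distrib, sum_sub_distrib, sum_const, hT, hT']
    simp only [nsmul_eq_mul, mul_assoc]
    ring
  rw [hexp]
  have hS1' : d * (l : ℝ) ^ 2 * (1 - 2 / (s + 1)) ≤ S1 := by
    have h1 : d * ((l : ℝ) ^ 2 * s ^ 2) / (s + 1) ^ 2 ≤ S1 := by
      rw [div_le_iff₀ (by positivity)]; linarith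
    refine le_trans ?_ h1
    rw [mul_assoc, mul_div_assoc, mul_div_assoc]
    gcongr
    have : (s : ℝ) ^ 2 / (s + 1) ^ 2 - (1 - 2 / (s + 1)) = 1 / (s + 1) ^ 2 := by
      field_simp; ring
    have h2 : (0 : ℝ) ≤ 1 / ((s : ℝ) + 1) ^ 2 := by positivity
    linarith
  have h3 : 2 * d * (d * (l : ℝ) ^ 2 * (1 - 2 / (s + 1))) ≤ 2 * d * S1 := by gcongr
  have h4 : d ^ 2 * ((l : ℝ) ^ 2 * (4 / (s + 1))) ≤ 1 * ((l : ℝ) ^ 2 * (4 / (s + 1))) := by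
    gcongr
    nlinarith
  have h5 : 2 * d * (d * (l : ℝ) ^ 2 * (1 - 2 / (s + 1))) =
      2 * ((l : ℝ) ^ 2 * d ^ 2) - d ^ 2 * ((l : ℝ) ^ 2 * (4 / (s + 1))) := by
    ring
  linarith

/-- Total deviation of the densities of the subpairs in `Q` from those of the pairs in `P`, bounded
by the energy gain from `P` to `Q`. -/
theorem sum_dev_le_energy {V : Type*} [Fintype V] [DecidableEq V] (G : SimpleGraph V)
    [DecidableRel G.Adj] {P Q : Finpartition (univ : Finset V)} {l : ℕ} (hR : Refines P Q l)
    (hQ : Q.IsEquipartition) (hs : 0 < Fintype.card V / #Q.parts) :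
    ∑ p ∈ P.parts.offDiag, ∑ X ∈ subParts Q p.1, ∑ Y ∈ subParts Q p.2,
        ((G.edgeDensity p.1 p.2 : ℝ) - G.edgeDensity X Y) ^ 2 ≤
      ((#P.parts : ℝ) * l) ^ 2 * ((Q.energy G : ℝ) - P.energy G +
        4 / (((Fintype.card V / #Q.parts : ℕ) : ℝ) + 1)) := by
  set s := Fintype.card V / #Q.parts with hsdef
  have hsize : ∀ X ∈ Q.parts, s ≤ #X ∧ #X ≤ s + 1 := fun X hX =>
    ⟨hQ.average_le_card_part hX, hQ.card_part_le_average_add_one hX⟩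
  have hQpos : 0 < #Q.parts := by
    rcases Nat.eq_zero_or_pos #Q.parts with h | h
    · rw [hsdef, h] at hs; simp at hs
    · exact h
  have hkl : (#Q.parts : ℝ) = #P.parts * l := by rw [hR.card]; push_cast; rfl
  have hkl0 : (0 : ℝ) < #P.parts * l := by rw [← hkl]; exact_mod_cast hQpos
  have hk0 : (#P.parts : ℝ) ≠ 0 := fun h => by rw [h] at hkl0; simp at hkl0
  have hl0 : (l : ℝ) ≠ 0 := fun h => by rw [h] at hkl0; simp at hkl0
  have h1 : ∀ p ∈ P.parts.offDiag, ∑ X ∈ subParts Q p.1, ∑ Y ∈ subParts Q p.2,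
        ((G.edgeDensity p.1 p.2 : ℝ) - G.edgeDensity X Y) ^ 2 ≤
      (∑ X ∈ subParts Q p.1, ∑ Y ∈ subParts Q p.2, (G.edgeDensity X Y : ℝ) ^ 2)
        - (l : ℝ) ^ 2 * (G.edgeDensity p.1 p.2 : ℝ) ^ 2 + (l : ℝ) ^ 2 * (4 / (s + 1)) := by
    intro p hp
    rw [mem_offDiag] at hp
    obtain ⟨T, hT⟩ := exists_subFinpartition hR.1 hp.1
    obtain ⟨T', hT'⟩ := exists_subFinpartition hR.1 hp.2.1
    rw [← hT, ← hT']
    refine sum_sq_dev_le G T T' hs (by rw [hT, hR.2 _ hp.1]) (by rw [hT', hR.2 _ hp.2.1]) ?_ ?_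
    · intro X hX
      rw [hT, mem_subParts] at hX
      exact hsize X hX.1
    · intro X hX
      rw [hT', mem_subParts] at hX
      exact hsize X hX.1
  have h2 : ∑ p ∈ P.parts.offDiag, ∑ X ∈ subParts Q p.1, ∑ Y ∈ subParts Q p.2,
      (G.edgeDensity X Y : ℝ) ^ 2 ≤ ∑ q ∈ Q.parts.offDiag, (G.edgeDensity q.1 q.2 : ℝ) ^ 2 :=
    sum_subParts_le (fun X Y => (G.edgeDensity X Y : ℝ) ^ 2) fun _ _ => sq_nonneg _
  have h3 : (#P.parts.offDiag : ℝ) ≤ (#P.parts : ℝ) ^ 2 := by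
    rw [offDiag_card, sq]
    exact_mod_cast Nat.sub_le _ _
  calc _ ≤ _ := sum_le_sum h1
    _ = ∑ p ∈ P.parts.offDiag, ∑ X ∈ subParts Q p.1, ∑ Y ∈ subParts Q p.2,
          (G.edgeDensity X Y : ℝ) ^ 2
        - (l : ℝ) ^ 2 * ∑ p ∈ P.parts.offDiag, (G.edgeDensity p.1 p.2 : ℝ) ^ 2
        + #P.parts.offDiag * ((l : ℝ) ^ 2 * (4 / (s + 1))) := by
      rw [sum_add_distrib, sum_sub_distrib, mul_sum, sum_const, nsmul_eq_mul]
    _ ≤ ∑ q ∈ Q.parts.offDiag, (G.edgeDensity q.1 q.2 : ℝ) ^ 2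
        - (l : ℝ) ^ 2 * ∑ p ∈ P.parts.offDiag, (G.edgeDensity p.1 p.2 : ℝ) ^ 2
        + (#P.parts : ℝ) ^ 2 * ((l : ℝ) ^ 2 * (4 / (s + 1))) := by
      gcongr
    _ = _ := by
      rw [Finpartition.coe_energy, Finpartition.coe_energy, hkl]
      field_simp

theorem energy_le_energy_add {V : Type*} [Fintype V] [DecidableEq V] (G : SimpleGraph V)
    [DecidableRel G.Adj] {P Q : Finpartition (univ : Finset V)} {l : ℕ} (hR : Refines P Q l)
    (hQ : Q.IsEquipartition) (hs : 0 < Fintype.card V / #Q.parts) :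
    (P.energy G : ℝ) ≤ Q.energy G + 4 / (((Fintype.card V / #Q.parts : ℕ) : ℝ) + 1) := by
  have h := sum_dev_le_energy G hR hQ hs
  have h0 : 0 ≤ ∑ p ∈ P.parts.offDiag, ∑ X ∈ subParts Q p.1, ∑ Y ∈ subParts Q p.2,
        ((G.edgeDensity p.1 p.2 : ℝ) - G.edgeDensity X Y) ^ 2 :=
    sum_nonneg fun _ _ => sum_nonneg fun _ _ => sum_nonneg fun _ _ => sq_nonneg _
  have hQpos : 0 < #Q.parts := by
    rcases Nat.eq_zero_or_pos #Q.parts with h | h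
    · rw [h] at hs; simp at hs
    · exact h
  have hkl0 : (0 : ℝ) < (#P.parts * l) ^ 2 := by
    have : (0 : ℝ) < #P.parts * l := by
      rw [hR.card] at hQpos; exact_mod_cast hQpos
    positivity
  have := nonneg_of_mul_nonneg_right (h0.trans h) hkl0
  linarith

/-! ### Regularising all colours at once -/

/-- The sum over all colours of the energies of `P`. -/
noncomputable def totalEnergy {V : Type*} [Fintype V] [DecidableEq V] {r : ℕ} (c : Sym2 V → Fin r)
    (P : Finpartition (univ : Finset V)) : ℝ :=
  ∑ ρ, (P.energy (colorGraph c ρ) : ℝ)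

theorem totalEnergy_le {V : Type*} [Fintype V] [DecidableEq V] {r : ℕ} (c : Sym2 V → Fin r)
    (P : Finpartition (univ : Finset V)) : totalEnergy c P ≤ r := by
  have h : ∀ ρ ∈ (univ : Finset (Fin r)), (P.energy (colorGraph c ρ) : ℝ) ≤ 1 := fun ρ _ => by
    have := P.energy_le_one (colorGraph c ρ)
    exact_mod_cast this
  simpa [totalEnergy] using sum_le_sum h

/-- One step of Szemerédi's iteration. The increment partition of Mathlib splits every part into
`4 ^ #P.parts` pieces even if `P` is already uniform; it raises the energy if `P` is not. -/
theorem exists_refine_step {V : Type*} [Fintype V] [DecidableEq V]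
    {P : Finpartition (univ : Finset V)} (hP : P.IsEquipartition) (hk : 0 < #P.parts)
    (hn : #P.parts * 16 ^ #P.parts ≤ Fintype.card V) (G : SimpleGraph V) [DecidableRel G.Adj]
    (ε : ℝ) :
    ∃ Q : Finpartition (univ : Finset V), Q.IsEquipartition ∧ Refines P Q (4 ^ #P.parts) ∧
      (7 ≤ #P.parts → 100 ≤ 4 ^ #P.parts * ε ^ 5 → 0 ≤ ε → ε ≤ 1 → ¬ P.IsUniform G ε →
        (P.energy G : ℝ) + ε ^ 5 / 4 ≤ Q.energy G) := by
  have hV : Nonempty V := by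
    rw [← Fintype.card_pos_iff]
    exact lt_of_lt_of_le (by positivity) hn
  refine ⟨SzemerediRegularity.increment hP G ε,
    SzemerediRegularity.increment_isEquipartition hP G ε, ?_, ?_⟩
  · have hm : Fintype.card V / SzemerediRegularity.stepBound #P.parts ≠ 0 := by
      have h1 : SzemerediRegularity.stepBound #P.parts ≤ Fintype.card V := by
        refine le_trans ?_ hn
        unfold SzemerediRegularity.stepBound
        gcongr
        norm_num
      exact (Nat.div_pos h1 (SzemerediRegularity.stepBound_pos hk)).ne'
    have hmem : ∀ X, X ∈ (SzemerediRegularity.increment hP G ε).parts ↔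
        ∃ (U : Finset V) (hU : U ∈ P.parts),
          X ∈ (SzemerediRegularity.chunk hP G ε hU).parts := by
      intro X
      rw [SzemerediRegularity.increment, Finpartition.mem_bind]
    refine ⟨?_, fun U hU => ?_⟩
    · intro X hX
      obtain ⟨U, hU, hXU⟩ := (hmem X).1 hX
      exact ⟨U, hU, Finpartition.le _ hXU⟩
    · rw [← SzemerediRegularity.card_chunk (hP := hP) (G := G) (ε := ε) (hU := hU) hm]
      congr 1
      ext X
      rw [mem_subParts, hmem]
      constructor
      · rintro ⟨⟨W, hW, hXW⟩, hXU⟩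
        obtain ⟨x, hx⟩ := Finpartition.nonempty_of_mem_parts _ hXW
        have : W = U := P.disjoint.elim_finset hW hU x (Finpartition.le _ hXW hx) (hXU hx)
        subst this
        exact hXW
      · intro hX
        exact ⟨⟨U, hU, hX⟩, Finpartition.le _ hX⟩
  · intro h7 h100 h0 h1 hnu
    exact SzemerediRegularity.energy_increment hP h7 h100 hn hnu h0 h1

/-- Every equipartition of a large vertex set can be refined to one with at least `t` parts. -/
theorem exists_refine_card_ge (t k : ℕ) (hk : 0 < k) :
    ∃ N : ℕ, ∀ (V : Type) [Fintype V] [DecidableEq V], N ≤ Fintype.card V →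
      ∀ P : Finpartition (univ : Finset V), P.IsEquipartition → #P.parts = k →
      ∃ (Q : Finpartition (univ : Finset V)) (l : ℕ), Q.IsEquipartition ∧ Refines P Q l ∧
        t ≤ #Q.parts ∧ 0 < #Q.parts ∧ #Q.parts ≤ N := by
  induction t with
  | zero =>
    refine ⟨k, fun V _ _ hN P hP hPk => ⟨P, 1, hP, Refines.refl, by omega, by omega, by omega⟩⟩
  | succ t ih =>
    obtain ⟨N, hN⟩ := ih
    refine ⟨N * 16 ^ N, fun V _ _ hV P hP hPk => ?_⟩
    have hN16 : N ≤ N * 16 ^ N := Nat.le_mul_of_pos_right _ (by positivity)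
    obtain ⟨Q, l, hQ, hR, ht, hpos, hQN⟩ := hN V (hN16.trans hV) P hP hPk
    have hle : #Q.parts * 16 ^ #Q.parts ≤ N * 16 ^ N := by gcongr; norm_num
    obtain ⟨Q', hQ', hR', -⟩ := exists_refine_step hQ hpos (hle.trans hV) ⊥ 1
    have h4 : 4 ≤ 4 ^ #Q.parts := Nat.le_self_pow hpos.ne' 4
    have hlow : #Q.parts * 4 ≤ #Q.parts * 4 ^ #Q.parts := Nat.mul_le_mul_left _ h4
    have hup : #Q.parts * 4 ^ #Q.parts ≤ #Q.parts * 16 ^ #Q.parts := by gcongr; norm_num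
    refine ⟨Q', l * 4 ^ #Q.parts, hQ', hR.trans hR', ?_, ?_, ?_⟩ <;> rw [hR'.card] <;> omega

/-- Induction on the number `T` of energy increments still available. -/
theorem exists_regular_aux (r : ℕ) (ε : ℝ) (hε : 0 < ε) (hε1 : ε ≤ 1) (T : ℕ) :
    ∀ k : ℕ, 7 ≤ k → 100 ≤ 4 ^ k * ε ^ 5 →
    ∃ N : ℕ, ∀ (V : Type) [Fintype V] [DecidableEq V] (c : Sym2 V → Fin r), N ≤ Fintype.card V →
      ∀ P : Finpartition (univ : Finset V), P.IsEquipartition → #P.parts = k →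
      (r : ℝ) < totalEnergy c P + T * (ε ^ 5 / 8) →
      ∃ (Q : Finpartition (univ : Finset V)) (l : ℕ), Q.IsEquipartition ∧ Refines P Q l ∧
        #Q.parts ≤ N ∧ ∀ ρ, Q.IsUniform (colorGraph c ρ) ε := by
  induction T with
  | zero =>
    intro k _ _
    refine ⟨0, fun V _ _ c _ P _ _ h => ?_⟩
    have := totalEnergy_le c P
    simp at h
    linarith
  | succ T ih =>
    intro k hk7 hk
    have hk4 : k ≤ k * 4 ^ k := Nat.le_mul_of_pos_right _ (by positivity)
    have hk100 : 100 ≤ (4 : ℝ) ^ (k * 4 ^ k) * ε ^ 5 := by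
      refine hk.trans ?_
      gcongr
      norm_num
    obtain ⟨N, hN⟩ := ih (k * 4 ^ k) (hk7.trans hk4) hk100
    -- parts of the next partition have size at least `s₀`, so the other colours lose little energy
    set s₀ : ℕ := ⌈32 * (r : ℝ) / ε ^ 5⌉₊ + 1 with hs₀
    refine ⟨N + k * 16 ^ k + k * 4 ^ k * s₀ + k, fun V _ _ c hV P hP hPk hT => ?_⟩
    by_cases hu : ∀ ρ, P.IsUniform (colorGraph c ρ) ε
    · exact ⟨P, 1, hP, Refines.refl, by omega, hu⟩
    push Not at hu
    obtain ⟨ρ, hρ⟩ := hu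
    obtain ⟨Q, hQ, hR, hinc⟩ := exists_refine_step hP (by omega)
      (by rw [hPk]; omega) (colorGraph c ρ) ε
    have hQk : #Q.parts = k * 4 ^ k := by rw [hR.card, hPk]
    have hinc := hinc (by omega) (by rw [hPk]; exact hk) hε.le hε1 hρ
    have hss : s₀ ≤ Fintype.card V / #Q.parts := by
      rw [hQk, Nat.le_div_iff_mul_le (by omega), mul_comm]
      omega
    have hspos : 0 < Fintype.card V / #Q.parts := by omega
    have herr : r * (4 / (((Fintype.card V / #Q.parts : ℕ) : ℝ) + 1)) ≤ ε ^ 5 / 8 := by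
      have h1 : 32 * (r : ℝ) / ε ^ 5 ≤ ((Fintype.card V / #Q.parts : ℕ) : ℝ) + 1 := by
        have h2 : (s₀ : ℝ) ≤ ((Fintype.card V / #Q.parts : ℕ) : ℝ) := by exact_mod_cast hss
        have h3 := Nat.le_ceil (32 * (r : ℝ) / ε ^ 5)
        rw [hs₀] at h2
        push_cast at h2
        linarith
      rw [div_le_iff₀ (by positivity)] at h1
      rw [← mul_div_assoc, div_le_iff₀ (by positivity)]
      linarith
    have hE : totalEnergy c P + ε ^ 5 / 8 ≤ totalEnergy c Q := by
      have h1 : ∑ σ, ((P.energy (colorGraph c σ) : ℝ) + if σ = ρ then ε ^ 5 / 4 else 0) ≤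
          ∑ σ, ((Q.energy (colorGraph c σ) : ℝ) +
            4 / (((Fintype.card V / #Q.parts : ℕ) : ℝ) + 1)) := by
        refine sum_le_sum fun σ _ => ?_
        have hp : (0 : ℝ) ≤ 4 / (((Fintype.card V / #Q.parts : ℕ) : ℝ) + 1) := by positivity
        split_ifs with h
        · subst h; linarith
        · have := energy_le_energy_add (colorGraph c σ) hR hQ hspos
          linarith
      rw [sum_add_distrib, sum_add_distrib, sum_ite_eq' univ ρ, if_pos (mem_univ _), sum_const,
        card_univ, Fintype.card_fin, nsmul_eq_mul] at h1
      unfold totalEnergy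
      linarith
    obtain ⟨Q', l, hQ', hR', hc, huu⟩ := hN V c (by omega) Q hQ hQk (by
      push_cast at hT
      linarith)
    exact ⟨Q', _, hQ', hR.trans hR', by omega, huu⟩

/-- Multicolour regularity lemma, starting from a given equipartition. -/
theorem exists_regular_refinement (r : ℕ) (ε : ℝ) (hε : 0 < ε) (hε1 : ε ≤ 1) (k : ℕ)
    (hk : 0 < k) :
    ∃ N : ℕ, ∀ (V : Type) [Fintype V] [DecidableEq V] (c : Sym2 V → Fin r), N ≤ Fintype.card V →
      ∀ P : Finpartition (univ : Finset V), P.IsEquipartition → #P.parts = k →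
      ∃ (Q : Finpartition (univ : Finset V)) (l : ℕ), Q.IsEquipartition ∧ Refines P Q l ∧
        #Q.parts ≤ N ∧ ∀ ρ, Q.IsUniform (colorGraph c ρ) ε := by
  obtain ⟨t, ht⟩ := pow_unbounded_of_one_lt (100 / ε ^ 5) (show (1 : ℝ) < 4 by norm_num)
  rw [div_lt_iff₀ (by positivity)] at ht
  obtain ⟨N₁, hN₁⟩ := exists_refine_card_ge (max 7 t) k hk
  obtain ⟨T, hT⟩ := exists_nat_gt ((r : ℝ) / (ε ^ 5 / 8))
  rw [div_lt_iff₀ (by positivity)] at hT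
  have key : ∀ q, max 7 t ≤ q → 7 ≤ q ∧ 100 ≤ (4 : ℝ) ^ q * ε ^ 5 := by
    intro q hq
    refine ⟨(le_max_left _ _).trans hq, ht.le.trans ?_⟩
    have : t ≤ q := (le_max_right _ _).trans hq
    gcongr
    norm_num
  choose! N hN using exists_regular_aux r ε hε hε1 T
  refine ⟨N₁ + (range (N₁ + 1)).sup N, fun V _ _ c hV P hP hPk => ?_⟩
  obtain ⟨Q, l, hQ, hR, hqt, hq0, hqN⟩ := hN₁ V (by omega) P hP hPk
  obtain ⟨h7, h100⟩ := key _ hqt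
  have hsup : N #Q.parts ≤ (range (N₁ + 1)).sup N := le_sup (mem_range.2 (by omega))
  obtain ⟨Q', l', hQ', hR', hc, hu⟩ := hN _ h7 h100 V c (by omega) Q hQ rfl (by
    have : 0 ≤ totalEnergy c Q := sum_nonneg fun ρ _ => by
      have := Q.energy_nonneg (colorGraph c ρ)
      exact_mod_cast this
    linarith)
  exact ⟨Q', _, hQ', hR.trans hR', by omega, hu⟩

/-- Iterating the regularity lemma, with `T` bounding the number of remaining rounds in which the
energy rises by more than `η`. -/
theorem exists_strong_regular (r : ℕ) (ε : ℕ → ℝ) (hε : ∀ k, 0 < ε k) (hε1 : ∀ k, ε k ≤ 1)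
    (η : ℝ) (T : ℕ) :
    ∀ k : ℕ, 0 < k →
    ∃ N : ℕ, ∀ (V : Type) [Fintype V] [DecidableEq V] (c : Sym2 V → Fin r), N ≤ Fintype.card V →
      ∀ P : Finpartition (univ : Finset V), P.IsEquipartition → #P.parts = k →
      (r : ℝ) < totalEnergy c P + T * η →
      ∃ (P' Q : Finpartition (univ : Finset V)) (l : ℕ), P'.IsEquipartition ∧
        Q.IsEquipartition ∧ Refines P' Q l ∧ k ≤ #P'.parts ∧ #Q.parts ≤ N ∧
        totalEnergy c Q ≤ totalEnergy c P' + η ∧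
        ∀ ρ, Q.IsUniform (colorGraph c ρ) (ε #P'.parts) := by
  induction T with
  | zero =>
    intro k _
    refine ⟨0, fun V _ _ c _ P _ _ h => ?_⟩
    have := totalEnergy_le c P
    simp at h
    linarith
  | succ T ih =>
    intro k hk
    choose! N hN using ih
    obtain ⟨N₁, hN₁⟩ := exists_regular_refinement r (ε k) (hε k) (hε1 k) k hk
    refine ⟨N₁ + 1 + (range (N₁ + 1)).sup N, fun V _ _ c hV P hP hPk hT => ?_⟩
    obtain ⟨Q, l, hQ, hR, hqN, hu⟩ := hN₁ V c (by omega) P hP hPk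
    by_cases h : totalEnergy c Q ≤ totalEnergy c P + η
    · exact ⟨P, Q, l, hP, hQ, hR, hPk.ge, by omega, h, by rwa [hPk]⟩
    push Not at h
    have : Nonempty V := Fintype.card_pos_iff.1 (by omega)
    have hq0 : 0 < #Q.parts := (Q.parts_nonempty univ_nonempty.ne_empty).card_pos
    have hkq : k ≤ #Q.parts := by
      rw [hR.card, hPk] at hq0 ⊢
      exact Nat.le_mul_of_pos_right _ (Nat.pos_of_mul_pos_left hq0)
    have hsup : N #Q.parts ≤ (range (N₁ + 1)).sup N := le_sup (mem_range.2 (by omega))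
    obtain ⟨P', Q', l', h1, h2, h3, h4, h5, h6, h7⟩ := hN _ hq0 V c (by omega) Q hQ rfl (by
      push_cast at hT
      linarith)
    exact ⟨P', Q', l', h1, h2, h3, by omega, by omega, h6, h7⟩

/-! ### Choosing representatives -/

/-- For a uniformly random `f : ι → Fin l` and `i ≠ j`, the pair `(f i, f j)` is uniform: the
translations of `f` at `i` and at `j` permute the functions `ι → Fin l`. -/
theorem sum_pair_eq {ι : Type*} [Fintype ι] [DecidableEq ι] (l : ℕ) [NeZero l]
    (h : Fin l → Fin l → ℝ) {i j : ι} (hij : i ≠ j) :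
    (l : ℝ) ^ 2 * ∑ f : ι → Fin l, h (f i) (f j) =
      Fintype.card (ι → Fin l) * ∑ a, ∑ b, h a b := by
  have h1 : ∀ a b : Fin l, ∑ f : ι → Fin l, h (f i) (f j) =
      ∑ f : ι → Fin l, h (f i + a) (f j + b) := by
    intro a b
    refine (Fintype.sum_equiv (Equiv.addRight (Pi.single i a + Pi.single j b)) _ _ ?_).symm
    intro f
    simp [hij, hij.symm]
  have h2 : ∑ a : Fin l, ∑ b : Fin l, ∑ f : ι → Fin l, h (f i + a) (f j + b) =
      (l : ℝ) ^ 2 * ∑ f : ι → Fin l, h (f i) (f j) := by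
    simp_rw [← h1]
    simp
    ring
  rw [← h2]
  have h3 : ∀ f : ι → Fin l, ∑ a, ∑ b, h (f i + a) (f j + b) = ∑ a, ∑ b, h a b := by
    intro f
    refine Fintype.sum_equiv (Equiv.addLeft (f i)) _ _ fun a => ?_
    exact Fintype.sum_equiv (Equiv.addLeft (f j)) _ _ fun b => rfl
  calc _ = ∑ a : Fin l, ∑ f : ι → Fin l, ∑ b : Fin l, h (f i + a) (f j + b) :=
        sum_congr rfl fun a _ => sum_comm
    _ = ∑ f : ι → Fin l, ∑ a : Fin l, ∑ b : Fin l, h (f i + a) (f j + b) := sum_comm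
    _ = _ := by
      rw [sum_congr rfl fun f _ => h3 f, sum_const, nsmul_eq_mul, card_univ]

/-- First-moment method: if the average cost of the pairs of subparts is less than `C`, some choice
of one subpart in each part of `P` has cost less than `C`. -/
theorem exists_selection {V : Type*} [Fintype V] [DecidableEq V]
    {P Q : Finpartition (univ : Finset V)} {l : ℕ} (hl : 0 < l) (hR : Refines P Q l)
    (F : Finset V → Finset V → Finset V → Finset V → ℝ) (C : ℝ)
    (h : ∑ p ∈ P.parts.offDiag, ∑ X ∈ subParts Q p.1, ∑ Y ∈ subParts Q p.2, F p.1 p.2 X Y <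
      (l : ℝ) ^ 2 * C) :
    ∃ f : Finset V → Finset V, (∀ U ∈ P.parts, f U ∈ subParts Q U) ∧
      ∑ p ∈ P.parts.offDiag, F p.1 p.2 (f p.1) (f p.2) < C := by
  have : NeZero l := ⟨hl.ne'⟩
  have hen : ∀ U ∈ P.parts, ∃ e : Fin l → Finset V, (∀ a, e a ∈ subParts Q U) ∧
      ∀ g : Finset V → ℝ, ∑ X ∈ subParts Q U, g X = ∑ a, g (e a) := by
    intro U hU
    let e := (Finset.equivFinOfCardEq (hR.2 U hU)).symm
    refine ⟨fun a => (e a : Finset V), fun a => (e a).2, fun g => ?_⟩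
    rw [← Finset.sum_coe_sort]
    exact (Fintype.sum_equiv e _ _ fun _ => rfl).symm
  choose! e he hsum using hen
  have hlt : ∑ f : Finset V → Fin l, ∑ p ∈ P.parts.offDiag,
      F p.1 p.2 (e p.1 (f p.1)) (e p.2 (f p.2)) < ∑ f : Finset V → Fin l, C := by
    have hl2 : (0 : ℝ) < (l : ℝ) ^ 2 := by positivity
    refine lt_of_mul_lt_mul_left ?_ hl2.le
    have hcard : (0 : ℝ) < Fintype.card (Finset V → Fin l) := by
      exact_mod_cast Fintype.card_pos
    calc _ = Fintype.card (Finset V → Fin l) * ∑ p ∈ P.parts.offDiag,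
          ∑ X ∈ subParts Q p.1, ∑ Y ∈ subParts Q p.2, F p.1 p.2 X Y := by
          rw [sum_comm, mul_sum, mul_sum]
          refine sum_congr rfl fun p hp => ?_
          rw [mem_offDiag] at hp
          rw [sum_pair_eq l (fun a b => F p.1 p.2 (e p.1 a) (e p.2 b)) hp.2.2, hsum _ hp.1]
          congr 1
          exact sum_congr rfl fun a _ => (hsum _ hp.2.1 _).symm
      _ < Fintype.card (Finset V → Fin l) * ((l : ℝ) ^ 2 * C) :=
          mul_lt_mul_of_pos_left h hcard
      _ = _ := by
          rw [sum_const, nsmul_eq_mul, card_univ]; ring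
  obtain ⟨f, -, hf⟩ := exists_lt_of_sum_lt hlt
  exact ⟨fun U => e U (f U), fun U hU => he U hU _, hf⟩

/-- Representatives with all pairs uniform and with small total squared density deviation. -/
theorem exists_representatives {V : Type*} [Fintype V] [DecidableEq V] {r : ℕ}
    (c : Sym2 V → Fin r) {P Q : Finpartition (univ : Finset V)} {l : ℕ} (hl : 0 < l)
    (hR : Refines P Q l) (hQ : Q.IsEquipartition) (hs : 0 < Fintype.card V / #Q.parts)
    {ε η M : ℝ} (hM : 0 < M) (hε : 0 ≤ ε)
    (hu : ∀ ρ, Q.IsUniform (colorGraph c ρ) ε)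
    (hεk : r * (#P.parts : ℝ) ^ 2 * ε ≤ 1 / 4)
    (hE : totalEnergy c Q ≤ totalEnergy c P + η)
    (herr : r * (4 / (((Fintype.card V / #Q.parts : ℕ) : ℝ) + 1)) ≤ η)
    (hη : 4 * ((#P.parts : ℝ) ^ 2 * η) ≤ M) :
    ∃ f : Finset V → Finset V, (∀ U ∈ P.parts, f U ∈ subParts Q U) ∧
      (∀ ρ, ∀ p ∈ P.parts.offDiag, (colorGraph c ρ).IsUniform ε (f p.1) (f p.2)) ∧
      ∑ p ∈ P.parts.offDiag, ∑ ρ, (((colorGraph c ρ).edgeDensity p.1 p.2 : ℝ) -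
        (colorGraph c ρ).edgeDensity (f p.1) (f p.2)) ^ 2 < M := by
  set J : Finset V → Finset V → ℝ := fun X Y =>
    ∑ ρ, if (colorGraph c ρ).IsUniform ε X Y then (0 : ℝ) else 1 with hJ
  have hJ0 : ∀ X Y, 0 ≤ J X Y := fun X Y => sum_nonneg fun ρ _ => by split_ifs <;> norm_num
  set D : Finset V → Finset V → Finset V → Finset V → ℝ := fun U W X Y =>
    ∑ ρ, (((colorGraph c ρ).edgeDensity U W : ℝ) - (colorGraph c ρ).edgeDensity X Y) ^ 2 with hD
  have hD0 : ∀ U W X Y, 0 ≤ D U W X Y := fun U W X Y => sum_nonneg fun ρ _ => sq_nonneg _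
  have hl2 : (0 : ℝ) < (l : ℝ) ^ 2 := by positivity
  have hsJ : ∑ p ∈ P.parts.offDiag, ∑ X ∈ subParts Q p.1, ∑ Y ∈ subParts Q p.2, J X Y ≤
      (l : ℝ) ^ 2 * (1 / 4) := by
    refine (sum_subParts_le J hJ0).trans ?_
    rw [hJ, sum_comm]
    have h1 : ∀ ρ ∈ (univ : Finset (Fin r)), (∑ q ∈ Q.parts.offDiag,
        if (colorGraph c ρ).IsUniform ε q.1 q.2 then (0 : ℝ) else 1) ≤
        ((#P.parts : ℝ) * l) ^ 2 * ε := by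
      intro ρ _
      have h2 : (∑ q ∈ Q.parts.offDiag,
        if (colorGraph c ρ).IsUniform ε q.1 q.2 then (0 : ℝ) else 1) =
          #(Q.nonUniforms (colorGraph c ρ) ε) := by
        rw [Finpartition.nonUniforms, card_filter]
        push_cast
        refine sum_congr rfl fun q _ => ?_
        by_cases h : (colorGraph c ρ).IsUniform ε q.1 q.2 <;> simp [h]
      rw [h2]
      refine (hu ρ).trans ?_
      gcongr
      have h3 : #Q.parts * (#Q.parts - 1) ≤ (#P.parts * l) ^ 2 := by
        rw [← hR.card, sq]
        exact Nat.mul_le_mul_left _ (Nat.sub_le _ _)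
      exact_mod_cast h3
    refine (sum_le_sum h1).trans ?_
    rw [sum_const, card_univ, Fintype.card_fin, nsmul_eq_mul]
    calc _ = (l : ℝ) ^ 2 * (r * (#P.parts : ℝ) ^ 2 * ε) := by ring
      _ ≤ _ := by gcongr
  have hsD : ∑ p ∈ P.parts.offDiag, ∑ X ∈ subParts Q p.1, ∑ Y ∈ subParts Q p.2, D p.1 p.2 X Y ≤
      (l : ℝ) ^ 2 * (M / 2) := by
    have h1 : ∑ p ∈ P.parts.offDiag, ∑ X ∈ subParts Q p.1, ∑ Y ∈ subParts Q p.2, D p.1 p.2 X Y =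
        ∑ ρ, ∑ p ∈ P.parts.offDiag, ∑ X ∈ subParts Q p.1, ∑ Y ∈ subParts Q p.2,
          (((colorGraph c ρ).edgeDensity p.1 p.2 : ℝ) -
            (colorGraph c ρ).edgeDensity X Y) ^ 2 := by
      refine Eq.trans (sum_congr rfl fun p _ => ?_) sum_comm
      refine Eq.trans (sum_congr rfl fun X _ => ?_) sum_comm
      exact sum_comm
    rw [h1]
    refine le_trans (sum_le_sum fun ρ _ => sum_dev_le_energy (colorGraph c ρ) hR hQ hs) ?_
    rw [← mul_sum, sum_add_distrib, sum_sub_distrib, sum_const, card_univ, Fintype.card_fin,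
      nsmul_eq_mul]
    unfold totalEnergy at hE
    calc _ ≤ ((#P.parts : ℝ) * l) ^ 2 * (η + η) := by
          gcongr
          linarith
      _ = (l : ℝ) ^ 2 * (4 * ((#P.parts : ℝ) ^ 2 * η) / 2) := by ring
      _ ≤ _ := by gcongr
  obtain ⟨f, hf, hcost⟩ := exists_selection hl hR (fun U W X Y => J X Y + D U W X Y / M) 1 (by
    simp_rw [sum_add_distrib, ← sum_div]
    calc _ ≤ (l : ℝ) ^ 2 * (1 / 4) + (l : ℝ) ^ 2 * (M / 2) / M := by gcongr
      _ = (l : ℝ) ^ 2 * (3 / 4) := by field_simp; norm_num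
      _ < _ := by gcongr; norm_num)
  rw [sum_add_distrib, ← sum_div] at hcost
  have hA : 0 ≤ ∑ p ∈ P.parts.offDiag, J (f p.1) (f p.2) := sum_nonneg fun _ _ => hJ0 _ _
  have hB : 0 ≤ ∑ p ∈ P.parts.offDiag, D p.1 p.2 (f p.1) (f p.2) :=
    sum_nonneg fun _ _ => hD0 _ _ _ _
  refine ⟨f, hf, ?_, ?_⟩
  · intro ρ p hp
    by_contra hnu
    have h1 : J (f p.1) (f p.2) ≤ ∑ p ∈ P.parts.offDiag, J (f p.1) (f p.2) :=
      single_le_sum (f := fun p : Finset V × Finset V => J (f p.1) (f p.2))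
        (fun _ _ => hJ0 _ _) hp
    have h2 : (1 : ℝ) ≤ J (f p.1) (f p.2) := by
      have := single_le_sum (s := univ) (a := ρ)
        (f := fun ρ => if (colorGraph c ρ).IsUniform ε (f p.1) (f p.2) then (0 : ℝ) else 1)
        (fun σ _ => by split_ifs <;> norm_num) (mem_univ _)
      simpa [hnu] using this
    have h3 : 0 ≤ (∑ p ∈ P.parts.offDiag, D p.1 p.2 (f p.1) (f p.2)) / M := by positivity
    linarith
  · have h3 : (∑ p ∈ P.parts.offDiag, D p.1 p.2 (f p.1) (f p.2)) / M < 1 := by linarith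
    rwa [div_lt_one hM] at h3

/-! ### Strong regularity with one representative per part -/

/-- the main theorem (Alon–Fischer–Krivelevich–Szegedy style) for
`r`-graphs: a regular-approximation equipartition `A` together with large subsets `A' i ⊆
A i` forming an equipartition of their union, all of whose pairs are `E k`-regular, and
whose pair densities almost all nearly agree with those of `A`. -/
theorem main_theorem_multicolor (r : ℕ) (hr : 2 ≤ r) (m : ℕ) (hm : 0 < m)
    (E : ℕ → ℝ) (hE : ∀ x : ℕ, 0 < E x ∧ E x < 1) :
    ∃ (S : ℕ) (δ : ℝ), 0 < δ ∧
      ∀ (V : Type) [Fintype V] [DecidableEq V] (c : Sym2 V → Fin r),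
        S ≤ Fintype.card V →
        ∃ (k : ℕ) (A A' : Fin k → Finset V),
          m ≤ k ∧ k ≤ S ∧
          IsEquipartition (univ : Finset V) A ∧
          (∀ i : Fin k, A' i ⊆ A i) ∧
          IsEquipartition (Finset.univ.biUnion A') A' ∧
          (∀ i : Fin k, δ * (Fintype.card V : ℝ) ≤ ((A' i).card : ℝ)) ∧
          (∀ i i' : Fin k, i < i' → MRegular c (E k) (A' i) (A' i')) ∧
          (((univ : Finset (Fin k × Fin k)).filter fun q =>
              q.1 < q.2 ∧ ¬ ∀ ρ : Fin r,
                |mdensity c ρ (A q.1) (A q.2) - mdensity c ρ (A' q.1) (A' q.2)| <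
                  E 0).card : ℝ)
            ≤ E 0 * ((k : ℝ) * ((k : ℝ) - 1) / 2) := by
  set η : ℝ := E 0 ^ 3 / 16 with hη
  have hE0 := (hE 0).1
  have hηpos : 0 < η := by positivity
  have hrpos : (0 : ℝ) < r := by
    have : 0 < r := by omega
    exact_mod_cast this
  -- regularity small enough to make all pairs of representatives regular at once
  set ε : ℕ → ℝ := fun k => min (E k) (1 / (4 * (r * ((k : ℝ) ^ 2 + 1)))) with hεdef
  have hεpos : ∀ k, 0 < ε k := fun k => lt_min (hE k).1 (by positivity)
  have hεE : ∀ k, ε k ≤ E k := fun k => min_le_left _ _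
  obtain ⟨T, hT⟩ := exists_nat_gt ((r : ℝ) / η)
  rw [div_lt_iff₀ hηpos] at hT
  obtain ⟨N, hN⟩ := exists_strong_regular r ε hεpos (fun k => (hεE k).trans (hE k).2.le) η T
    (max 7 m) (by omega)
  set s₀ : ℕ := ⌈4 * (r : ℝ) / η⌉₊ + 1 with hs₀
  refine ⟨N * s₀ + N + max 7 m, 1 / (2 * (N + 1)), by positivity, ?_⟩
  intro V _ _ c hV
  obtain ⟨P₀, hP₀, hP₀k⟩ := Finpartition.exists_equipartition_card_eq (univ : Finset V)
    (n := max 7 m) (by omega) (by rw [card_univ]; omega)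
  obtain ⟨P, Q, l, hP, hQ, hR, hPk, hQN, hEn, hu⟩ := hN V c (by omega) P₀ hP₀ hP₀k (by
    have : 0 ≤ totalEnergy c P₀ := sum_nonneg fun ρ _ => by
      have := P₀.energy_nonneg (colorGraph c ρ)
      exact_mod_cast this
    linarith)
  have : Nonempty V := Fintype.card_pos_iff.1 (by omega)
  have hq0 : 0 < #Q.parts := (Q.parts_nonempty univ_nonempty.ne_empty).card_pos
  have hl : 0 < l := by
    rw [hR.card] at hq0
    exact Nat.pos_of_mul_pos_left hq0
  have hkq : #P.parts ≤ #Q.parts := by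
    rw [hR.card]
    exact Nat.le_mul_of_pos_right _ hl
  have hss : s₀ ≤ Fintype.card V / #Q.parts := by
    rw [Nat.le_div_iff_mul_le hq0, mul_comm]
    have : #Q.parts * s₀ ≤ N * s₀ := Nat.mul_le_mul_right _ hQN
    omega
  have hspos : 0 < Fintype.card V / #Q.parts := by omega
  have hk7 : 7 ≤ #P.parts := by omega
  have hk7' : (7 : ℝ) ≤ #P.parts := by exact_mod_cast hk7
  obtain ⟨f, hf, hfu, hfd⟩ := exists_representatives c hl hR hQ hspos
    (M := E 0 ^ 3 * ((#P.parts : ℝ) * (#P.parts - 1) / 2)) (η := η)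
    (mul_pos (by positivity) (by nlinarith)) (hεpos _).le hu
    (by
      have h1 : ε #P.parts ≤ 1 / (4 * (r * ((#P.parts : ℝ) ^ 2 + 1))) := min_le_right _ _
      calc r * (#P.parts : ℝ) ^ 2 * ε #P.parts
          ≤ r * ((#P.parts : ℝ) ^ 2 + 1) * (1 / (4 * (r * ((#P.parts : ℝ) ^ 2 + 1)))) := by
            have := (hεpos #P.parts).le
            gcongr
            linarith
        _ = 1 / 4 := by field_simp)
    hEn
    (by
      have h1 : 4 * (r : ℝ) / η ≤ ((Fintype.card V / #Q.parts : ℕ) : ℝ) + 1 := by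
        have h2 : (s₀ : ℝ) ≤ ((Fintype.card V / #Q.parts : ℕ) : ℝ) := by exact_mod_cast hss
        have h3 := Nat.le_ceil (4 * (r : ℝ) / η)
        rw [hs₀] at h2
        push_cast at h2
        linarith
      rw [div_le_iff₀ hηpos] at h1
      rw [← mul_div_assoc, div_le_iff₀ (by positivity)]
      linarith)
    (by
      have h1 : (#P.parts : ℝ) ^ 2 / 4 ≤ (#P.parts : ℝ) * (#P.parts - 1) / 2 := by nlinarith
      calc 4 * ((#P.parts : ℝ) ^ 2 * η) = E 0 ^ 3 * ((#P.parts : ℝ) ^ 2 / 4) := by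
            rw [hη]; ring
        _ ≤ _ := by gcongr)
  set A : Fin #P.parts → Finset V := fun i => (P.parts.equivFin.symm i : Finset V) with hA
  have hAmem : ∀ i, A i ∈ P.parts := fun i => (P.parts.equivFin.symm i).2
  have hAinj : Function.Injective A :=
    Subtype.val_injective.comp P.parts.equivFin.symm.injective
  have hAdisj : ∀ i j, i ≠ j → Disjoint (A i) (A j) := fun i j hij =>
    P.disjoint (hAmem i) (hAmem j) (hAinj.ne hij)
  have hfA : ∀ i, f (A i) ∈ Q.parts ∧ f (A i) ⊆ A i := fun i =>
    mem_subParts.1 (hf _ (hAmem i))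
  have hfdisj : ∀ i j, i ≠ j → Disjoint (f (A i)) (f (A j)) := fun i j hij =>
    (hAdisj i j hij).mono (hfA i).2 (hfA j).2
  have hoff : ∀ i j, i ≠ j → (A i, A j) ∈ P.parts.offDiag := fun i j hij =>
    mem_offDiag.2 ⟨hAmem i, hAmem j, hAinj.ne hij⟩
  refine ⟨#P.parts, A, fun i => f (A i), by omega, by omega, ⟨hAdisj, ?_, ?_⟩,
    fun i => (hfA i).2, ⟨hfdisj, rfl, ?_⟩, ?_, ?_, ?_⟩
  · refine eq_univ_iff_forall.2 fun x => ?_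
    obtain ⟨U, hU, hx⟩ := P.exists_mem (mem_univ x)
    refine mem_biUnion.2 ⟨P.parts.equivFin ⟨U, hU⟩, mem_univ _, ?_⟩
    simpa [hA] using hx
  · intro i j
    exact (hP.card_part_le_average_add_one (hAmem i)).trans
      (Nat.add_le_add_right (hP.average_le_card_part (hAmem j)) 1)
  · intro i j
    exact (hQ.card_part_le_average_add_one (hfA i).1).trans
      (Nat.add_le_add_right (hQ.average_le_card_part (hfA j).1) 1)
  · intro i
    have h1 : Fintype.card V / #Q.parts ≤ #(f (A i)) := hQ.average_le_card_part (hfA i).1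
    -- the rounding in `n / #Q.parts` costs at most a factor of 2
    have h2 : Fintype.card V ≤ 2 * (N + 1) * (Fintype.card V / #Q.parts) := by
      have h3 := Nat.lt_div_mul_add (a := Fintype.card V) hq0
      nlinarith
    have h4 : (Fintype.card V : ℝ) ≤ 2 * (N + 1) * #(f (A i)) := by
      have := h2.trans (Nat.mul_le_mul_left _ h1)
      exact_mod_cast this
    rw [div_mul_eq_mul_div, one_mul, div_le_iff₀ (by positivity)]
    linarith
  · intro i j hij X hX Y hY hXc hYc ρ
    rw [mdensity_eq c ρ ((hfdisj i j hij.ne).mono hX hY), mdensity_eq c ρ (hfdisj i j hij.ne)]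
    refine ((hfu ρ _ (hoff i j hij.ne)).mono (hεE _) hX hY ?_ ?_).le
    · rw [mul_comm]; exact hXc
    · rw [mul_comm]; exact hYc
  · set bad := ((univ : Finset (Fin #P.parts × Fin #P.parts)).filter fun q =>
              q.1 < q.2 ∧ ¬ ∀ ρ : Fin r,
                |mdensity c ρ (A q.1) (A q.2) - mdensity c ρ (f (A q.1)) (f (A q.2))| <
                  E 0) with hbad
    have h1 : (#bad : ℝ) * E 0 ^ 2 ≤ ∑ p ∈ P.parts.offDiag, ∑ ρ,
        (((colorGraph c ρ).edgeDensity p.1 p.2 : ℝ) -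
          (colorGraph c ρ).edgeDensity (f p.1) (f p.2)) ^ 2 := by
      have hinj : Set.InjOn (fun q : Fin #P.parts × Fin #P.parts => (A q.1, A q.2)) bad := by
        intro q _ q' _ h
        simp only [Prod.mk.injEq] at h
        exact Prod.ext (hAinj h.1) (hAinj h.2)
      have hsub : bad.image (fun q => (A q.1, A q.2)) ⊆ P.parts.offDiag := by
        intro p hp
        obtain ⟨q, hq, rfl⟩ := mem_image.1 hp
        exact hoff _ _ (mem_filter.1 hq).2.1.ne
      refine le_trans ?_ (sum_le_sum_of_subset_of_nonneg hsub
        fun _ _ _ => sum_nonneg fun _ _ => sq_nonneg _)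
      rw [sum_image hinj, ← nsmul_eq_mul]
      refine card_nsmul_le_sum _ _ _ fun q hq => ?_
      obtain ⟨-, hlt, hq⟩ := mem_filter.1 hq
      push Not at hq
      obtain ⟨ρ, hρ⟩ := hq
      rw [mdensity_eq c ρ (hAdisj _ _ hlt.ne), mdensity_eq c ρ (hfdisj _ _ hlt.ne)] at hρ
      have h2 := single_le_sum (s := univ) (a := ρ) (f := fun ρ =>
        (((colorGraph c ρ).edgeDensity (A q.1) (A q.2) : ℝ) -
          (colorGraph c ρ).edgeDensity (f (A q.1)) (f (A q.2))) ^ 2)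
        (fun _ _ => sq_nonneg _) (mem_univ _)
      refine le_trans ?_ h2
      rw [← sq_abs (_ - _)]
      exact pow_le_pow_left₀ hE0.le hρ 2
    have h2 := h1.trans hfd.le
    have hE2 : 0 < E 0 ^ 2 := by positivity
    refine le_of_mul_le_mul_right (h2.trans_eq ?_) hE2
    ring
end

section
/- Let X_1, …, X_n be nonnegative real numbers and let 1 ≤ m < n. If Σ_{k=1}^m X_k = (m/n)·Σ_{k=1}^n X_k + α for some real number α (not necessarily positive), then Σ_{k=1}^n X_k² ≥ (1/n)·(Σ_{k=1}^n X_k)² + α²·n/(m(n − m)). -/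
/-!
Split the sum at `m` and let `A`, `B` be the sums of the two blocks. Cauchy–Schwarz on each block
bounds the sum of squares below by `A² / m + B² / (n - m)`. With `S = A + B`, the hypothesis says
`A = (m / n) S + α` and `B = ((n - m) / n) S - α`, and expanding turns this lower bound into exactly
`S² / n + α² n / (m (n - m))`, the cross terms in `S α` cancelling.
-/

open Finset

/-- a defect form of the Cauchy–Schwarz inequality.  The numbers
`X 0, …, X (n-1)` play the roles of `X_1, …, X_n`. -/
theorem defect_cauchy_schwarz (n m : ℕ) (hm : 1 ≤ m) (hmn : m < n)
    (X : ℕ → ℝ) (hX : ∀ i < n, 0 ≤ X i) (α : ℝ)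
    (hsum : ∑ i ∈ Finset.range m, X i =
      ((m : ℝ) / (n : ℝ)) * ∑ i ∈ Finset.range n, X i + α) :
    (1 / (n : ℝ)) * (∑ i ∈ Finset.range n, X i) ^ 2 +
        α ^ 2 * (n : ℝ) / ((m : ℝ) * ((n : ℝ) - (m : ℝ))) ≤
      ∑ i ∈ Finset.range n, (X i) ^ 2 := by
  have hm0 : (0 : ℝ) < m := by exact_mod_cast hm
  have hd0 : (0 : ℝ) < (n : ℝ) - m := sub_pos.mpr (by exact_mod_cast hmn)
  have hn0 : (0 : ℝ) < n := by linarith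
  have hA : (∑ i ∈ Finset.range m, X i) ^ 2 / m ≤ ∑ i ∈ Finset.range m, X i ^ 2 := by
    rw [div_le_iff₀' hm0]
    simpa using sq_sum_le_card_mul_sum_sq (s := Finset.range m) (f := X)
  have hB : (∑ i ∈ Finset.Ico m n, X i) ^ 2 / ((n : ℝ) - m) ≤ ∑ i ∈ Finset.Ico m n, X i ^ 2 := by
    rw [div_le_iff₀' hd0]
    simpa [Nat.cast_sub hmn.le] using sq_sum_le_card_mul_sum_sq (s := Finset.Ico m n) (f := X)
  have hS := Finset.sum_range_add_sum_Ico X hmn.le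
  have hQ := Finset.sum_range_add_sum_Ico (fun i => X i ^ 2) hmn.le
  rw [← hQ]
  refine le_trans (le_of_eq ?_) (add_le_add hA hB)
  rw [eq_sub_of_add_eq' hS, hsum]
  generalize ∑ i ∈ Finset.range n, X i = S
  field_simp
  ring
end
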